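/- arXiv:1701.01705 — 8 statements merged into one kernel-verified Lean document; each statement's English description precedes it below -/
import Mathlib

section
/- O'Neill formula for symplectic reductions of fanning curves (Theorem 4.6): In the reduction setting, let 𝐀(t) : ℓ(t) → ℓ(t) be the O'Neill endomorphism, i.e. the linear map determined by 𝐀(t)a_j(t) = P_𝔳(t)ȧ_j(t) for j ≤ k and 𝐀(t)a_j(t) = −P_𝔥(t)ȧ_j(t) for j > k, where P_𝔥(t), P_𝔳(t) are the projections associated with the decomposition V = 𝔥(t) ⊕ 𝔳(t) ⊕ h(t). Let K(t) be the Jacobi endomorphism of A, and let K_R(t) and W_R(t) be the Jacobi endomorphism and the Wronskian bilinear form of the reduced fanning frame Ā = (π∘a_1, …, π∘a_k) in (𝕎/𝕎^ω, ω_R). Then for every t and every u ∈ 𝔥(t) = ℓ(t) ∩ 𝕎: W_R(t)(K_R(t)π(u), π(u)) = W(t)(K(t)u, u) + 3·W(t)(𝐀(t)u, 𝐀(t)u), where W(t) is the Wronskian bilinear form of A on ℓ(t). -/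
/-- The symplectic orthogonal `S^ω = {u : ω(u, s) = 0 for all s ∈ S}` of a subspace. -/
def sympOrtho {V : Type*} [AddCommGroup V] [Module ℝ V]
    (ω : V →ₗ[ℝ] V →ₗ[ℝ] ℝ) (S : Submodule ℝ V) : Submodule ℝ V where
  carrier := {u | ∀ s ∈ S, ω u s = 0}
  add_mem' := fun ha hb s hs => by
    simp only [map_add, LinearMap.add_apply, ha s hs, hb s hs, add_zero]
  zero_mem' := fun s hs => by simp
  smul_mem' := fun c a ha s hs => by
    simp only [map_smul, LinearMap.smul_apply, ha s hs, smul_zero]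

/-!
Write `F` for the fundamental endomorphism of a Lagrangian fanning frame. Differentiating `F² = 0`
gives `F'F = -F`, `F'² = 1` and `F''F = -1 - F'`, so that `K = ¼F''²` commutes with `F` and, since
`ω` makes `F`, `F'` and `F''` skew, `W(KFx, Fx) = -¼ ω(F''Fx, F''x)` for all `x`. Along a curve
`x = ȧ` with `a = ∑ cᵢaᵢ` this turns into the Schwarzian-type formula
`W(Ka, a) = ½ d/dt ω(a, ä) + ω(ȧ, ä) + ¾ ω(ä, Fä)`.

For `a` in `𝔥`, the curves `a`, `ȧ`, `ä` stay in `𝕎`, so reduction preserves the first two terms and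
the O'Neill correction is the change of the last one. Modulo `𝕎^ω`, the vector `ä` is a combination
of the `aᵢ` and `ȧᵢ` with `i ≤ k`, on which `F` descends to the reduced endomorphism; the remaining
part `w ∈ 𝕎^ω` has `Fw ∈ 𝔳`. It contributes `ω(w, Fw) = -W(Fw, Fw)`, and `Fw = P_𝔳 F ä = 2𝐀a`.
-/

open Module Submodule

section Bilinear

theorem linearIndependent_sumElim_of_isUnit_wronskian {R M κ : Type*} [CommRing R]
    [AddCommGroup M] [Module R M] [Fintype κ] [DecidableEq κ] (B : M →ₗ[R] M →ₗ[R] R)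
    {b b' : κ → M} (hb : ∀ i j, B (b i) (b j) = 0)
    (hW : IsUnit (Matrix.of fun i j => B (b i) (b' j))) :
    LinearIndependent R (Sum.elim b b') := by
  rw [Fintype.linearIndependent_iff]
  intro g hg
  simp only [Fintype.sum_sum_type, Sum.elim_inl, Sum.elim_inr] at hg
  have hinr : g ∘ Sum.inr = 0 := by
    apply Matrix.mulVec_injective_of_isUnit hW
    ext j
    simpa [Matrix.mulVec, dotProduct, hb, mul_comm] using congrArg (B (b j)) hg
  have hinl : g ∘ Sum.inl = 0 := by
    apply Matrix.vecMul_injective_of_isUnit hW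
    ext j
    have hinr' : ∀ i, g (Sum.inr i) = 0 := congrFun hinr
    simpa [Matrix.vecMul, dotProduct, hinr'] using congrArg (B · (b' j)) hg
  exact Sum.forall.2 ⟨congrFun hinl, congrFun hinr⟩

theorem finrank_add_finrank_sympOrtho {V : Type*} [AddCommGroup V] [Module ℝ V]
    [FiniteDimensional ℝ V] {ω : V →ₗ[ℝ] V →ₗ[ℝ] ℝ} (hω : ω.SeparatingRight)
    (W : Submodule ℝ V) :
    finrank ℝ W + finrank ℝ (sympOrtho ω W) = finrank ℝ V := by
  have horth : sympOrtho ω W = LinearMap.BilinForm.orthogonal (LinearMap.flip ω) W := rfl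
  rw [horth, LinearMap.BilinForm.finrank_add_finrank_orthogonal',
    LinearMap.separatingRight_iff_flip_ker_eq_bot.1 hω, inf_bot_eq, finrank_bot, add_zero]

end Bilinear

section Derivatives

variable {E G : Type*} [NormedAddCommGroup E] [NormedSpace ℝ E]
  [NormedAddCommGroup G] [NormedSpace ℝ G]

theorem hasDerivAt_unique_of_forall_eq {f g : ℝ → E} {f' g' : E} {t : ℝ}
    (hf : HasDerivAt f f' t) (hg : HasDerivAt g g' t) (h : ∀ s, f s = g s) : f' = g' :=
  (funext h ▸ hf).unique hg

theorem hasDerivAt_bilinear [FiniteDimensional ℝ E] (B : E →ₗ[ℝ] E →ₗ[ℝ] ℝ) {f g : ℝ → E}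
    {f' g' : E} {t : ℝ} (hf : HasDerivAt f f' t) (hg : HasDerivAt g g' t) :
    HasDerivAt (fun s => B (f s) (g s)) (B (f t) g' + B f' (g t)) t :=
  B.toContinuousBilinearMap.hasDerivAt_of_bilinear (fun _ => hf) (fun _ => hg)

theorem hasDerivAt_clm_apply_const {L : ℝ → E →L[ℝ] G} {L' : E →L[ℝ] G} {t : ℝ}
    (hL : HasDerivAt L L' t) (x : E) : HasDerivAt (fun s => L s x) (L' x) t := by
  simpa using hL.clm_apply (hasDerivAt_const t x)

theorem mem_of_hasDerivAt [FiniteDimensional ℝ E] {W : Submodule ℝ E} {f : ℝ → E} {f' : E}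
    {t : ℝ} (hf : HasDerivAt f f' t) (hW : ∀ s, f s ∈ W) : f' ∈ W := by
  have hspan : span ℝ (f '' Set.univ) ≤ W :=
    span_le.2 (Set.image_subset_iff.2 fun s _ => hW s)
  rw [← hf.deriv]
  exact closure_minimal hspan W.closed_of_finiteDimensional
    (range_deriv_subset_closure_span_image f dense_univ ⟨t, rfl⟩)

theorem skew_of_hasDerivAt [FiniteDimensional ℝ E] (B : E →ₗ[ℝ] E →ₗ[ℝ] ℝ)
    {L : ℝ → E →L[ℝ] E} {L' : E →L[ℝ] E} {t : ℝ} (hL : HasDerivAt L L' t)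
    (hskew : ∀ s x y, B (L s x) y = -B x (L s y)) (x y : E) : B (L' x) y = -B x (L' y) := by
  have hleft := hasDerivAt_bilinear B (hasDerivAt_clm_apply_const hL x) (hasDerivAt_const t y)
  have hright := hasDerivAt_bilinear B (hasDerivAt_const t x) (hasDerivAt_clm_apply_const hL y)
  simpa using hasDerivAt_unique_of_forall_eq hleft hright.neg (hskew · x y)

end Derivatives

section FanningFrames

variable {E G ι κ : Type*} [NormedAddCommGroup E] [NormedSpace ℝ E]
  [NormedAddCommGroup G] [NormedSpace ℝ G]
  {A A' A'' : ℝ → ι → E} {F F' F'' : ℝ → E →L[ℝ] E}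

/-- The span of the 1-jet `(a, ȧ)` of a frame at one time. -/
def firstJetSpan (a a' : ι → E) : Submodule ℝ E := span ℝ (Set.range (Sum.elim a a'))

/-- `A` is a twice differentiable fanning frame with derivatives `A'` and `A''`. Only the spanning
half of the basis condition is recorded. -/
structure IsFanning (A A' A'' : ℝ → ι → E) : Prop where
  hasDerivAt : ∀ t i, HasDerivAt (fun s => A s i) (A' t i) t
  hasDerivAt_velocity : ∀ t i, HasDerivAt (fun s => A' s i) (A'' t i) t
  firstJetSpan_eq_top : ∀ t, firstJetSpan (A t) (A' t) = ⊤

/-- `F` is the fundamental endomorphism of the frame `A` with velocity `A'`, and `F'`, `F''` are its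
first two derivatives. -/
structure IsFundamentalEndomorphism (A A' : ℝ → ι → E) (F F' F'' : ℝ → E →L[ℝ] E) : Prop where
  apply_frame : ∀ t i, F t (A t i) = 0
  apply_velocity : ∀ t i, F t (A' t i) = A t i
  hasDerivAt : ∀ t, HasDerivAt F (F' t) t
  hasDerivAt_deriv : ∀ t, HasDerivAt F' (F'' t) t

namespace IsFanning

theorem of_contDiff (hA : ∀ i, ContDiff ℝ 2 fun t => A t i)
    (hA' : ∀ i t, HasDerivAt (fun s => A s i) (A' t i) t)
    (hspan : ∀ t, firstJetSpan (A t) (A' t) = ⊤) :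
    IsFanning A A' fun t i => deriv (fun s => A' s i) t where
  hasDerivAt t i := hA' i t
  hasDerivAt_velocity t i := by
    have hderiv : (fun s => A' s i) = deriv fun s => A s i := funext fun s => (hA' i s).deriv.symm
    have hsmooth : ContDiff ℝ 1 (deriv fun s => A s i) :=
      ((contDiff_succ_iff_deriv (n := 1)).1 (hA i)).2.2
    rw [hderiv]
    exact (hsmooth.differentiable one_ne_zero t).hasDerivAt
  firstJetSpan_eq_top := hspan

theorem linearMap_ext {M : Type*} [AddCommGroup M] [Module ℝ M] (hA : IsFanning A A' A'') (t : ℝ)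
    {f g : E →ₗ[ℝ] M} (hframe : ∀ i, f (A t i) = g (A t i))
    (hvelocity : ∀ i, f (A' t i) = g (A' t i)) : f = g :=
  LinearMap.ext_on_range (hA.firstJetSpan_eq_top t) (Sum.forall.2 ⟨hframe, hvelocity⟩)

theorem clm_ext (hA : IsFanning A A' A'') (t : ℝ) {f g : E →L[ℝ] E}
    (hframe : ∀ i, f (A t i) = g (A t i)) (hvelocity : ∀ i, f (A' t i) = g (A' t i)) : f = g :=
  ContinuousLinearMap.coe_injective (hA.linearMap_ext t hframe hvelocity)

end IsFanning

namespace IsFundamentalEndomorphism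

theorem deriv_apply_frame (hF : IsFundamentalEndomorphism A A' F F' F'')
    (hA : IsFanning A A' A'') (t : ℝ) (i : ι) : F' t (A t i) = -A t i := by
  have h := hasDerivAt_unique_of_forall_eq ((hF.hasDerivAt t).clm_apply (hA.hasDerivAt t i))
    (hasDerivAt_const t 0) (hF.apply_frame · i)
  rw [hF.apply_velocity] at h
  exact eq_neg_of_add_eq_zero_left h

theorem deriv_apply_velocity (hF : IsFundamentalEndomorphism A A' F F' F'')
    (hA : IsFanning A A' A'') (t : ℝ) (i : ι) : F' t (A' t i) = A' t i - F t (A'' t i) :=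
  eq_sub_of_add_eq <| hasDerivAt_unique_of_forall_eq
    ((hF.hasDerivAt t).clm_apply (hA.hasDerivAt_velocity t i)) (hA.hasDerivAt t i)
    (hF.apply_velocity · i)

theorem mul_self (hF : IsFundamentalEndomorphism A A' F F' F'') (hA : IsFanning A A' A'') (t : ℝ) :
    F t * F t = 0 :=
  hA.clm_ext t (by simp [hF.apply_frame]) (by simp [hF.apply_frame, hF.apply_velocity])

theorem deriv_mul (hF : IsFundamentalEndomorphism A A' F F' F'') (hA : IsFanning A A' A'')
    (t : ℝ) : F' t * F t = -F t :=
  hA.clm_ext t (by simp [hF.apply_frame])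
    (by simp [hF.apply_velocity, hF.deriv_apply_frame hA])

theorem mul_deriv (hF : IsFundamentalEndomorphism A A' F F' F'') (hA : IsFanning A A' A'')
    (t : ℝ) : F t * F' t = F t := by
  have h := hasDerivAt_unique_of_forall_eq ((hF.hasDerivAt t).mul (hF.hasDerivAt t))
    (hasDerivAt_const t 0) (hF.mul_self hA)
  rwa [hF.deriv_mul hA, neg_add_eq_zero, eq_comm] at h

theorem deriv_mul_deriv (hF : IsFundamentalEndomorphism A A' F F' F'') (hA : IsFanning A A' A'')
    (t : ℝ) : F' t * F' t = 1 := by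
  have h (x : E) : F' t (F t x) = -F t x := DFunLike.congr_fun (hF.deriv_mul hA t) x
  exact hA.clm_ext t (by simp [hF.deriv_apply_frame hA])
    (by simp [hF.deriv_apply_velocity hA, h])

theorem deriv₂_mul (hF : IsFundamentalEndomorphism A A' F F' F'') (hA : IsFanning A A' A'')
    (t : ℝ) : F'' t * F t = -1 - F' t := by
  have h := hasDerivAt_unique_of_forall_eq ((hF.hasDerivAt_deriv t).mul (hF.hasDerivAt t))
    (hF.hasDerivAt t).neg (hF.deriv_mul hA)
  rw [hF.deriv_mul_deriv hA] at h
  rw [eq_sub_of_add_eq h]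
  abel

theorem mul_deriv₂ (hF : IsFundamentalEndomorphism A A' F F' F'') (hA : IsFanning A A' A'')
    (t : ℝ) : F t * F'' t = F' t - 1 := by
  have h := hasDerivAt_unique_of_forall_eq ((hF.hasDerivAt t).mul (hF.hasDerivAt_deriv t))
    (hF.hasDerivAt t) (hF.mul_deriv hA)
  rw [hF.deriv_mul_deriv hA] at h
  exact eq_sub_of_add_eq' h

theorem commute_deriv₂_sq (hF : IsFundamentalEndomorphism A A' F F' F'') (hA : IsFanning A A' A'')
    (t : ℝ) : Commute (F t) (F'' t * F'' t) := by
  have hanti : F t * F'' t = -1 - 1 - F'' t * F t := by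
    rw [hF.mul_deriv₂ hA, hF.deriv₂_mul hA]
    abel
  have h : F t * F'' t * F'' t = F'' t * (F'' t * F t) := by
    rw [hanti, sub_mul, mul_assoc, hanti]
    noncomm_ring
  rwa [mul_assoc, ← mul_assoc (F'' t)] at h

theorem apply_mem_span (hF : IsFundamentalEndomorphism A A' F F' F'') {t : ℝ} {e : κ → ι} {y : E}
    (hy : y ∈ firstJetSpan (fun j => A t (e j)) (fun j => A' t (e j))) :
    F t y ∈ span ℝ (Set.range fun j => A t (e j)) := by
  have hle : firstJetSpan (fun j => A t (e j)) (fun j => A' t (e j))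
      ≤ (span ℝ (Set.range fun j => A t (e j))).comap (F t : E →ₗ[ℝ] E) := by
    rw [firstJetSpan, span_le]
    rintro _ ⟨j | j, rfl⟩
    · simp [hF.apply_frame]
    · simpa [hF.apply_velocity] using subset_span (Set.mem_range_self j)
  exact hle hy

theorem apply_map (hF : IsFundamentalEndomorphism A A' F F' F'') {t : ℝ} {e : κ → ι}
    {p : E →L[ℝ] G} {FR FR' FR'' : ℝ → G →L[ℝ] G}
    (hFR : IsFundamentalEndomorphism (fun t j => p (A t (e j))) (fun t j => p (A' t (e j)))
      FR FR' FR'') {y : E} (hy : y ∈ firstJetSpan (fun j => A t (e j)) (fun j => A' t (e j))) :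
    FR t (p y) = p (F t y) := by
  have h : Set.EqOn (FR t ∘L p) (p ∘L F t)
      (Set.range (Sum.elim (fun j => A t (e j)) (fun j => A' t (e j)))) := by
    rintro _ ⟨j | j, rfl⟩
    · simp [hF.apply_frame, hFR.apply_frame t j]
    · simp [hF.apply_velocity, hFR.apply_velocity t j]
  exact LinearMap.eqOn_span (f := (FR t ∘L p : E →ₗ[ℝ] G)) (g := (p ∘L F t : E →ₗ[ℝ] G)) h hy

section Isotropic

variable {ω B : E →ₗ[ℝ] E →ₗ[ℝ] ℝ} {t : ℝ}

theorem wronskian_apply (hF : IsFundamentalEndomorphism A A' F F' F'') (hA : IsFanning A A' A'')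
    (hω : ∀ t i j, ω (A t i) (A t j) = 0) (hB : ∀ i j, B (A t i) (A t j) = ω (A t i) (A' t j))
    (x y : E) : B (F t x) (F t y) = ω (F t x) y := by
  have h : (B.compl₂ (F t : E →ₗ[ℝ] E)) ∘ₗ (F t : E →ₗ[ℝ] E) = ω ∘ₗ (F t : E →ₗ[ℝ] E) :=
    hA.linearMap_ext t (by simp [hF.apply_frame]) fun i =>
      hA.linearMap_ext t (by simp [hF.apply_frame, hF.apply_velocity, hω])
        (by simp [hF.apply_velocity, hB])
  exact LinearMap.congr_fun₂ h x y

variable [FiniteDimensional ℝ E]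

theorem skew (hF : IsFundamentalEndomorphism A A' F F' F'') (hA : IsFanning A A' A'')
    (hω : ∀ t i j, ω (A t i) (A t j) = 0) (t : ℝ) (x y : E) :
    ω (F t x) y = -ω x (F t y) := by
  have hcross (i j : ι) : ω (A t i) (A' t j) = -ω (A' t i) (A t j) :=
    eq_neg_of_add_eq_zero_left <| hasDerivAt_unique_of_forall_eq
      (hasDerivAt_bilinear ω (hA.hasDerivAt t i) (hA.hasDerivAt t j)) (hasDerivAt_const t 0)
      (hω · i j)
  have h : ω ∘ₗ (F t : E →ₗ[ℝ] E) = -ω.compl₂ (F t : E →ₗ[ℝ] E) :=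
    hA.linearMap_ext t
      (fun i => hA.linearMap_ext t (by simp [hF.apply_frame])
        (by simp [hF.apply_frame, hF.apply_velocity, hω]))
      (fun i => hA.linearMap_ext t (by simp [hF.apply_frame, hF.apply_velocity, hω])
        (by simp [hF.apply_velocity, hcross]))
  exact LinearMap.congr_fun₂ h x y

theorem skew_deriv (hF : IsFundamentalEndomorphism A A' F F' F'') (hA : IsFanning A A' A'')
    (hω : ∀ t i j, ω (A t i) (A t j) = 0) (t : ℝ) (x y : E) :
    ω (F' t x) y = -ω x (F' t y) :=
  skew_of_hasDerivAt ω (hF.hasDerivAt t) (hF.skew hA hω) x y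

theorem skew_deriv₂ (hF : IsFundamentalEndomorphism A A' F F' F'') (hA : IsFanning A A' A'')
    (hω : ∀ t i j, ω (A t i) (A t j) = 0) (t : ℝ) (x y : E) :
    ω (F'' t x) y = -ω x (F'' t y) :=
  skew_of_hasDerivAt ω (hF.hasDerivAt_deriv t) (hF.skew_deriv hA hω) x y

theorem wronskian_jacobi (hF : IsFundamentalEndomorphism A A' F F' F'')
    (hA : IsFanning A A' A'') (hω : ∀ t i j, ω (A t i) (A t j) = 0)
    (hB : ∀ i j, B (A t i) (A t j) = ω (A t i) (A' t j)) (x : E) :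
    B ((1 / 4 : ℝ) • F'' t (F'' t (F t x))) (F t x) = -(1 / 4) * ω (F'' t (F t x)) (F'' t x) := by
  have hcomm : F'' t (F'' t (F t x)) = F t (F'' t (F'' t x)) :=
    (DFunLike.congr_fun (hF.commute_deriv₂_sq hA t) x).symm
  calc B ((1 / 4 : ℝ) • F'' t (F'' t (F t x))) (F t x)
      = 1 / 4 * ω (F t (F'' t (F'' t x))) x := by
        rw [hcomm, map_smul, LinearMap.smul_apply, hF.wronskian_apply hA hω hB, smul_eq_mul]
    _ = 1 / 4 * ω (F'' t (F'' t (F t x))) x := by rw [hcomm]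
    _ = -(1 / 4) * ω (F'' t (F t x)) (F'' t x) := by rw [hF.skew_deriv₂ hA hω]; ring

theorem hasDerivAt_form_apply (hF : IsFundamentalEndomorphism A A' F F' F'')
    (hA : IsFanning A A' A'') (hω : ∀ t i j, ω (A t i) (A t j) = 0)
    (hB : ∀ i j, B (A t i) (A t j) = ω (A t i) (A' t j)) {x x' : ℝ → E}
    (hx : HasDerivAt x (x' t) t) (hFx : ∀ s, F' s (x s) = x s - F s (x' s)) :
    HasDerivAt (fun s => ω (F s (x s)) (x' s))
      (2 * B ((1 / 4 : ℝ) • F'' t (F'' t (F t (x t)))) (F t (x t))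
        - 2 * ω (x t) (x' t) - 3 / 2 * ω (x' t) (F t (x' t))) t := by
  have hfun (s : ℝ) : ω (F s (x s)) (x' s) = ω (x s) (F' s (x s)) - ω (x s) (x s) := by
    rw [hF.skew hA hω, hFx, map_sub]
    ring
  have hF'x : HasDerivAt (fun s => F' s (x s)) (F'' t (x t) + F' t (x' t)) t :=
    (hF.hasDerivAt_deriv t).clm_apply hx
  have hF''F (y : E) : F'' t (F t y) = -y - F' t y := DFunLike.congr_fun (hF.deriv₂_mul hA t) y
  have hcross : ω (F t (x' t)) (F'' t (x t)) = ω (x' t) (F t (x' t)) := by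
    have h := hF.skew_deriv₂ hA hω t (F t (x' t)) (x t)
    simp only [hF''F, map_sub, map_neg, LinearMap.sub_apply, LinearMap.neg_apply,
      hF.skew_deriv hA hω t (x' t), hFx t] at h
    linarith
  have hjacobi : -4 * B ((1 / 4 : ℝ) • F'' t (F'' t (F t (x t)))) (F t (x t))
      = -2 * ω (x t) (F'' t (x t)) + ω (x' t) (F t (x' t)) := by
    rw [hF.wronskian_jacobi hA hω hB, hF''F, hFx, ← hcross]
    simp only [map_sub, map_neg, LinearMap.sub_apply, LinearMap.neg_apply]
    ring
  rw [funext hfun]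
  refine ((hasDerivAt_bilinear ω hx hF'x).sub (hasDerivAt_bilinear ω hx hx)).congr_deriv ?_
  have hskew := hF.skew_deriv hA hω t (x t) (x' t)
  simp only [hFx, map_add, map_sub, LinearMap.sub_apply, hF.skew hA hω t (x' t)] at hskew ⊢
  linarith

theorem hasDerivAt_form_sum_frame [Fintype κ] (hF : IsFundamentalEndomorphism A A' F F' F'')
    (hA : IsFanning A A' A'') (hω : ∀ t i j, ω (A t i) (A t j) = 0)
    (hB : ∀ i j, B (A t i) (A t j) = ω (A t i) (A' t j)) (e : κ → ι) (c : κ → ℝ) :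
    HasDerivAt (fun s => ω (∑ j, c j • A s (e j)) (∑ j, c j • A'' s (e j)))
      (2 * B ((1 / 4 : ℝ) • F'' t (F'' t (∑ j, c j • A t (e j)))) (∑ j, c j • A t (e j))
        - 2 * ω (∑ j, c j • A' t (e j)) (∑ j, c j • A'' t (e j))
        - 3 / 2 * ω (∑ j, c j • A'' t (e j)) (F t (∑ j, c j • A'' t (e j)))) t := by
  have hFx (s : ℝ) : F s (∑ j, c j • A' s (e j)) = ∑ j, c j • A s (e j) := by
    simp [hF.apply_velocity]
  have hx : HasDerivAt (fun s => ∑ j, c j • A' s (e j)) (∑ j, c j • A'' t (e j)) t :=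
    HasDerivAt.fun_sum fun j _ => (hA.hasDerivAt_velocity t (e j)).const_smul (c j)
  have hF'x (s : ℝ) : F' s (∑ j, c j • A' s (e j))
      = ∑ j, c j • A' s (e j) - F s (∑ j, c j • A'' s (e j)) := by
    simp [hF.deriv_apply_velocity hA, smul_sub]
  simpa only [hFx] using
    hF.hasDerivAt_form_apply (x' := fun s => ∑ j, c j • A'' s (e j)) hA hω hB hx hF'x

end Isotropic

end IsFundamentalEndomorphism

end FanningFrames

section Reduction

variable {V Q ι κ : Type*} [NormedAddCommGroup V] [NormedSpace ℝ V]
  [NormedAddCommGroup Q] [NormedSpace ℝ Q]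
  {ω : V →ₗ[ℝ] V →ₗ[ℝ] ℝ} {W : Submodule ℝ V} {p : V →L[ℝ] Q} {ωR : Q →ₗ[ℝ] Q →ₗ[ℝ] ℝ}
  {e : κ → ι} {A A' A'' : ℝ → ι → V} {F F' F'' : ℝ → V →L[ℝ] V} {FR FR' FR'' : ℝ → Q →L[ℝ] Q}
  {t : ℝ}

/-- `(Q, ωR)` is the symplectic reduction `W / W^ω` of the coisotropic subspace `W`. The map `p` is
any extension to `V` of the quotient map; only its values on `W` matter. -/
structure IsSymplecticReduction (ω : V →ₗ[ℝ] V →ₗ[ℝ] ℝ) (W : Submodule ℝ V) (p : V →L[ℝ] Q)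
    (ωR : Q →ₗ[ℝ] Q →ₗ[ℝ] ℝ) : Prop where
  coisotropic : sympOrtho ω W ≤ W
  surjOn : Set.SurjOn p W Set.univ
  apply_eq_zero_iff : ∀ w ∈ W, p w = 0 ↔ w ∈ sympOrtho ω W
  form_apply : ∀ u ∈ W, ∀ v ∈ W, ωR (p u) (p v) = ω u v

namespace IsSymplecticReduction

theorem finrank_add_two_mul_finrank_sympOrtho [FiniteDimensional ℝ V]
    (hred : IsSymplecticReduction ω W p ωR) (hω : ω.SeparatingRight) :
    finrank ℝ Q + 2 * finrank ℝ (sympOrtho ω W) = finrank ℝ V := by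
  let q : W →ₗ[ℝ] Q := (p : V →ₗ[ℝ] Q).domRestrict W
  have hrange : LinearMap.range q = ⊤ := LinearMap.range_eq_top.2 fun y =>
    let ⟨w, hw, hwy⟩ := hred.surjOn (Set.mem_univ y)
    ⟨⟨w, hw⟩, hwy⟩
  have hker : LinearMap.ker q = (sympOrtho ω W).comap W.subtype :=
    Submodule.ext fun w => hred.apply_eq_zero_iff w w.2
  have hrank := q.finrank_range_add_finrank_ker
  rw [hrange, finrank_top, hker, (comapSubtypeEquivOfLe hred.coisotropic).finrank_eq] at hrank
  have := finrank_add_finrank_sympOrtho hω W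
  omega

theorem exists_sub_mem_sympOrtho (hred : IsSymplecticReduction ω W p ωR) {b b' : κ → V}
    (hb : ∀ j, b j ∈ W) (hb' : ∀ j, b' j ∈ W)
    (hspan : firstJetSpan (fun j => p (b j)) (fun j => p (b' j)) = ⊤) {z : V} (hz : z ∈ W) :
    ∃ y ∈ firstJetSpan b b', z - y ∈ sympOrtho ω W := by
  have hmap : (firstJetSpan b b').map (p : V →ₗ[ℝ] Q) = ⊤ := by
    rw [← hspan, firstJetSpan, firstJetSpan, map_span, ← Set.range_comp, Sum.comp_elim]
    rfl
  obtain ⟨y, hy, hyz⟩ : p z ∈ (firstJetSpan b b').map (p : V →ₗ[ℝ] Q) := hmap ▸ mem_top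
  have hyW : y ∈ W := span_le.2 (Set.range_subset_iff.2 (Sum.forall.2 ⟨hb, hb'⟩)) hy
  refine ⟨y, hy, (hred.apply_eq_zero_iff _ (W.sub_mem hz hyW)).1 ?_⟩
  rw [map_sub, sub_eq_zero]
  exact hyz.symm

end IsSymplecticReduction

/-- The frame `A` with velocity `A'` is adapted to `W`: the vectors `A t (e j)` lie in `W`, the
Wronskian is nondegenerate on their span `𝔥`, and the remaining `A t i` span its
Wronskian-orthogonal complement `𝔳`. -/
structure IsAdapted [Fintype κ] [DecidableEq κ] (ω : V →ₗ[ℝ] V →ₗ[ℝ] ℝ) (W : Submodule ℝ V)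
    (e : κ → ι) (A A' : ℝ → ι → V) : Prop where
  mem : ∀ t j, A t (e j) ∈ W
  wronskian_eq_zero : ∀ t j, ∀ i ∉ Set.range e, ω (A t (e j)) (A' t i) = 0
  isUnit_wronskian : ∀ t, IsUnit (Matrix.of fun i j => ω (A t (e i)) (A' t (e j)))

/-- `Pv` is the projection onto `𝔳` for the decomposition `V = 𝔥 ⊕ 𝔳 ⊕ h` given by a frame
`a` with velocity `a'`, the vectors `a (e j)` spanning `𝔥`. The horizontal space `h` is spanned by
the `P_h (a' i)`, where `P_h = ½ (1 + F')`. -/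
structure IsVerticalProjection (e : κ → ι) (a a' : ι → V) (F' : V →L[ℝ] V) (Pv : V →ₗ[ℝ] V) :
    Prop where
  apply_mem_range : ∀ j, Pv (a (e j)) = 0
  apply_notMem_range : ∀ i ∉ Set.range e, Pv (a i) = a i
  apply_horizontal : ∀ i, Pv ((1 / 2 : ℝ) • (a' i + F' (a' i))) = 0

namespace IsAdapted

variable [Fintype κ] [DecidableEq κ]

theorem isotropic_reduced (hW : IsAdapted ω W e A A') (hω : ∀ t i j, ω (A t i) (A t j) = 0)
    (hred : IsSymplecticReduction ω W p ωR) (t : ℝ) (i j : κ) :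
    ωR (p (A t (e i))) (p (A t (e j))) = 0 := by
  rw [hred.form_apply _ (hW.mem t i) _ (hW.mem t j), hω]

variable [FiniteDimensional ℝ V]

theorem velocity_mem (hW : IsAdapted ω W e A A') (hA : IsFanning A A' A'') (t : ℝ) (j : κ) :
    A' t (e j) ∈ W :=
  mem_of_hasDerivAt (hA.hasDerivAt t (e j)) (hW.mem · j)

theorem acceleration_mem (hW : IsAdapted ω W e A A') (hA : IsFanning A A' A'') (t : ℝ) (j : κ) :
    A'' t (e j) ∈ W :=
  mem_of_hasDerivAt (hA.hasDerivAt_velocity t (e j)) (hW.velocity_mem hA · j)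

theorem isFanning_reduced [FiniteDimensional ℝ Q] (hW : IsAdapted ω W e A A')
    (hA : IsFanning A A' A'') (hω : ∀ t i j, ω (A t i) (A t j) = 0)
    (hred : IsSymplecticReduction ω W p ωR) (hQ : finrank ℝ Q = 2 * Fintype.card κ) :
    IsFanning (fun t j => p (A t (e j))) (fun t j => p (A' t (e j)))
      (fun t j => p (A'' t (e j))) where
  hasDerivAt t j := p.hasFDerivAt.comp_hasDerivAt t (hA.hasDerivAt t (e j))
  hasDerivAt_velocity t j := p.hasFDerivAt.comp_hasDerivAt t (hA.hasDerivAt_velocity t (e j))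
  firstJetSpan_eq_top t := by
    have hunit : IsUnit (Matrix.of fun i j => ωR (p (A t (e i))) (p (A' t (e j)))) := by
      simpa only [hred.form_apply _ (hW.mem t _) _ (hW.velocity_mem hA t _)]
        using hW.isUnit_wronskian t
    have hindep := linearIndependent_sumElim_of_isUnit_wronskian ωR
      (hW.isotropic_reduced hω hred t) hunit
    exact hindep.span_eq_top_of_card_eq_finrank' (by rw [hQ, Fintype.card_sum, two_mul])

theorem fundamentalEndomorphism_mem_span_of_mem_sympOrtho (hW : IsAdapted ω W e A A')
    (hA : IsFanning A A' A'') (hωalt : ω.IsAlt) (hω : ∀ t i j, ω (A t i) (A t j) = 0)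
    (hF : IsFundamentalEndomorphism A A' F F' F'') {w : V} (hw : w ∈ sympOrtho ω W) :
    F t w ∈ span ℝ (A t '' (Set.range e)ᶜ) := by
  have hFw : F t w ∈ span ℝ (Set.range (A t)) :=
    hF.apply_mem_span (e := id) (hA.firstJetSpan_eq_top t ▸ mem_top)
  rw [← Set.image_univ, ← Set.union_compl_self (Set.range e), Set.image_union, span_union,
    ← Set.range_comp, mem_sup] at hFw
  obtain ⟨y, hy, v, hv, hyv⟩ := hFw
  obtain ⟨c, rfl⟩ := (mem_span_range_iff_exists_fun ℝ).1 hy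
  have hFw_orth (i : κ) : ω (F t w) (A' t (e i)) = 0 := by
    rw [hF.skew hA hω, hF.apply_velocity, hw _ (hW.mem t i), neg_zero]
  have hv_orth (i : κ) : ω v (A' t (e i)) = 0 := by
    have hle : span ℝ (A t '' (Set.range e)ᶜ) ≤ LinearMap.ker (ω.flip (A' t (e i))) := by
      rw [span_le]
      rintro _ ⟨l, hl, rfl⟩
      have hsymm : ω (A t l) (A' t (e i)) = ω (A t (e i)) (A' t l) := by
        have h := hF.skew hA hω t (A' t l) (A' t (e i))
        rwa [hF.apply_velocity, hF.apply_velocity, hωalt.neg] at h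
      simpa [hsymm] using hW.wronskian_eq_zero t i l hl
    exact hle hv
  have hc : c = 0 := by
    apply Matrix.vecMul_injective_of_isUnit (hW.isUnit_wronskian t)
    ext i
    have h := hFw_orth i
    rw [← hyv, map_add, LinearMap.add_apply, hv_orth, add_zero] at h
    simpa [Matrix.vecMul, dotProduct] using h
  simpa [← hyv, hc] using hv

end IsAdapted

namespace IsVerticalProjection

variable {Pv : V →ₗ[ℝ] V}

theorem apply_velocity (hPv : IsVerticalProjection e (A t) (A' t) (F' t) Pv)
    (hA : IsFanning A A' A'') (hF : IsFundamentalEndomorphism A A' F F' F'') (i : ι) :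
    Pv (A' t i) = (1 / 2 : ℝ) • Pv (F t (A'' t i)) := by
  have hsplit : A' t i = (1 / 2 : ℝ) • (A' t i + F' t (A' t i)) + (1 / 2 : ℝ) • F t (A'' t i) := by
    rw [hF.deriv_apply_velocity hA]
    module
  conv_lhs => rw [hsplit]
  rw [map_add, hPv.apply_horizontal, zero_add, map_smul]

theorem apply_eq_zero (hPv : IsVerticalProjection e (A t) (A' t) (F' t) Pv) {v : V}
    (hv : v ∈ span ℝ (Set.range fun j => A t (e j))) : Pv v = 0 := by
  have hle : span ℝ (Set.range fun j => A t (e j)) ≤ LinearMap.ker Pv :=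
    span_le.2 (Set.range_subset_iff.2 hPv.apply_mem_range)
  exact hle hv

theorem apply_eq_self (hPv : IsVerticalProjection e (A t) (A' t) (F' t) Pv) {v : V}
    (hv : v ∈ span ℝ (A t '' (Set.range e)ᶜ)) : Pv v = v :=
  LinearMap.eqOn_span (f := Pv) (g := .id) (Set.forall_mem_image.2 hPv.apply_notMem_range) hv

theorem form_eq_reduced_sub_wronskian [FiniteDimensional ℝ V] [Fintype κ] [DecidableEq κ]
    {B : V →ₗ[ℝ] V →ₗ[ℝ] ℝ} (hPv : IsVerticalProjection e (A t) (A' t) (F' t) Pv)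
    (hA : IsFanning A A' A'') (hF : IsFundamentalEndomorphism A A' F F' F'')
    (hωalt : ω.IsAlt) (hω : ∀ t i j, ω (A t i) (A t j) = 0)
    (hB : ∀ i j, B (A t i) (A t j) = ω (A t i) (A' t j))
    (hred : IsSymplecticReduction ω W p ωR) (hW : IsAdapted ω W e A A')
    (hspan : firstJetSpan (fun j => p (A t (e j))) (fun j => p (A' t (e j))) = ⊤)
    (hFR : IsFundamentalEndomorphism (fun t j => p (A t (e j))) (fun t j => p (A' t (e j)))
      FR FR' FR'') {z : V} (hz : z ∈ W) :
    ω z (F t z) = ωR (p z) (FR t (p z)) - B (Pv (F t z)) (Pv (F t z)) := by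
  obtain ⟨y, hy, hw⟩ := hred.exists_sub_mem_sympOrtho (hW.mem t) (hW.velocity_mem hA t)
    hspan hz
  obtain ⟨w, rfl⟩ : ∃ w, z = y + w := ⟨z - y, by abel⟩
  rw [add_sub_cancel_left] at hw
  have hFy := hF.apply_mem_span hy
  have hFyW : F t y ∈ W := span_le.2 (Set.range_subset_iff.2 (hW.mem t)) hFy
  have hyW : y ∈ W := (W.add_mem_iff_left (hred.coisotropic hw)).1 hz
  have hpw : p w = 0 := (hred.apply_eq_zero_iff w (hred.coisotropic hw)).2 hw
  have hPvF : Pv (F t (y + w)) = F t w := by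
    rw [map_add, map_add, hPv.apply_eq_zero hFy, zero_add,
      hPv.apply_eq_self (hW.fundamentalEndomorphism_mem_span_of_mem_sympOrtho hA hωalt hω hF hw)]
  have hcross : ω y (F t w) = 0 := by
    rw [← neg_eq_zero, ← hF.skew hA hω, ← hωalt.neg, hw _ hFyW, neg_zero]
  have hreduced : ωR (p (y + w)) (FR t (p (y + w))) = ω y (F t y) := by
    rw [map_add, hpw, add_zero, hF.apply_map hFR hy, hred.form_apply _ hyW _ hFyW]
  have hvertical : B (F t w) (F t w) = -ω w (F t w) := by
    rw [hF.wronskian_apply hA hω hB, hF.skew hA hω]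
  rw [hPvF, hreduced, hvertical]
  simp only [map_add, LinearMap.add_apply, hw _ hFyW, hcross]
  ring

end IsVerticalProjection

theorem oneill_formula_symplectic_reduction_general [FiniteDimensional ℝ V]
    [FiniteDimensional ℝ Q] [Fintype κ] [DecidableEq κ] {B : V →ₗ[ℝ] V →ₗ[ℝ] ℝ}
    {BR : Q →ₗ[ℝ] Q →ₗ[ℝ] ℝ} {Pv O : V →ₗ[ℝ] V}
    (hωalt : ω.IsAlt) (hω : ∀ t i j, ω (A t i) (A t j) = 0) (hA : IsFanning A A' A'')
    (hF : IsFundamentalEndomorphism A A' F F' F'') (hred : IsSymplecticReduction ω W p ωR)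
    (hQ : finrank ℝ Q = 2 * Fintype.card κ) (hW : IsAdapted ω W e A A')
    (hFR : IsFundamentalEndomorphism (fun t j => p (A t (e j))) (fun t j => p (A' t (e j)))
      FR FR' FR'')
    (hPv : IsVerticalProjection e (A t) (A' t) (F' t) Pv)
    (hO : ∀ j, O (A t (e j)) = Pv (A' t (e j)))
    (hB : ∀ i j, B (A t i) (A t j) = ω (A t i) (A' t j))
    (hBR : ∀ i j, BR (p (A t (e i))) (p (A t (e j))) = ωR (p (A t (e i))) (p (A' t (e j))))
    {u : V} (hu : u ∈ span ℝ (Set.range fun j => A t (e j))) :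
    BR ((1 / 4 : ℝ) • FR'' t (FR'' t (p u))) (p u)
      = B ((1 / 4 : ℝ) • F'' t (F'' t u)) u + 3 * B (O u) (O u) := by
  obtain ⟨c, rfl⟩ := (mem_span_range_iff_exists_fun ℝ).1 hu
  have hAR := hW.isFanning_reduced hA hω hred hQ
  have hcomb {b : κ → V} (hb : ∀ j, b j ∈ W) : ∑ j, c j • b j ∈ W :=
    W.sum_mem fun j _ => W.smul_mem _ (hb j)
  have hacc (s : ℝ) := hcomb (hW.acceleration_mem hA s)
  have hderiv := hF.hasDerivAt_form_sum_frame (t := t) hA hω hB e c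
  have hderivR := hFR.hasDerivAt_form_sum_frame (t := t) hAR
    (hW.isotropic_reduced hω hred) hBR id c
  simp only [id, ← map_smul, ← map_sum] at hderivR
  have hjacobi := hasDerivAt_unique_of_forall_eq hderiv hderivR fun s =>
    (hred.form_apply _ (hcomb (hW.mem s)) _ (hacc s)).symm
  have hcross := hred.form_apply _ (hcomb (hW.velocity_mem hA t)) _ (hacc t)
  have hcorrection := hPv.form_eq_reduced_sub_wronskian hA hF hωalt hω hB hred hW
    (hAR.firstJetSpan_eq_top t) hFR (hacc t)
  have hOu : O (∑ j, c j • A t (e j)) = (1 / 2 : ℝ) • Pv (F t (∑ j, c j • A'' t (e j))) := by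
    simp [hO, hPv.apply_velocity hA hF, Finset.smul_sum, smul_comm (c _)]
  rw [hOu]
  simp only [map_smul, LinearMap.smul_apply, smul_eq_mul] at hjacobi ⊢
  linarith

end Reduction

/-- **Theorem 4.6 (O'Neill formula for symplectic reductions of fanning curves).**
In the reduction setting, let `𝐀(t) : ℓ(t) → ℓ(t)` be the O'Neill endomorphism
(`𝐀(t)a_j = P_𝔳(t)ȧ_j` for `j ≤ k`, `𝐀(t)a_j = −P_𝔥(t)ȧ_j` for `j > k`), `K(t)` the
Jacobi endomorphism of `A`, and `K_R(t)`, `W_R(t)` the Jacobi endomorphism and Wronskian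
of the reduced frame `Ā = (π∘a_1, …, π∘a_k)` in `(𝕎/𝕎^ω, ω_R)`.  Then for every `t` and
every `u ∈ 𝔥(t) = ℓ(t) ∩ 𝕎`:
`W_R(t)(K_R(t)π(u), π(u)) = W(t)(K(t)u, u) + 3·W(t)(𝐀(t)u, 𝐀(t)u)`. -/
theorem oneill_formula_symplectic_reduction
    {V : Type*} [NormedAddCommGroup V] [NormedSpace ℝ V] [FiniteDimensional ℝ V]
    {n : ℕ} (hn : 0 < n) (hdim : Module.finrank ℝ V = 2 * n)
    (ω : V →ₗ[ℝ] V →ₗ[ℝ] ℝ)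
    (halt : ∀ v, ω v v = 0)
    (hnd : ∀ v, (∀ w, ω v w = 0) → v = 0)
    (A A' : ℝ → Fin n → V)
    (hA : ∀ i, ContDiff ℝ (⊤ : ℕ∞) (fun t => A t i))
    (hA' : ∀ i t, HasDerivAt (fun s => A s i) (A' t i) t)
    (hfan : ∀ t, LinearIndependent ℝ (Sum.elim (A t) (A' t)) ∧
      Submodule.span ℝ (Set.range (Sum.elim (A t) (A' t))) = ⊤)
    (hLag : ∀ t i j, ω (A t i) (A t j) = 0)
    -- the fundamental endomorphism of `A` and its derivatives
    (F F' F'' : ℝ → V →L[ℝ] V)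
    (hF0 : ∀ t i, F t (A t i) = 0)
    (hF1 : ∀ t i, F t (A' t i) = A t i)
    (hFd : ∀ t, HasDerivAt F (F' t) t)
    (hFd' : ∀ t, HasDerivAt F' (F'' t) t)
    -- the horizontal frame
    (H : ℝ → Fin n → V)
    (hH : ∀ t j, H t j = (1/2 : ℝ) • (A' t j + F' t (A' t j)))
    -- the reduction setting
    (Wsub : Submodule ℝ V)
    (hco : sympOrtho ω Wsub ≤ Wsub)
    (k : ℕ) (hkn : k ≤ n)
    (hk : k + Module.finrank ℝ (sympOrtho ω Wsub) = n)
    (hmem : ∀ t (i : Fin n), (i : ℕ) < k → A t i ∈ Wsub)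
    (hmem' : ∀ t (i : Fin n), (i : ℕ) < k → A' t i ∈ Wsub)
    (hspan : ∀ t, Submodule.span ℝ {v | ∃ i : Fin n, (i : ℕ) < k ∧ v = A t i} =
      Submodule.span ℝ (Set.range (A t)) ⊓ Wsub)
    (hblock : ∀ t (i j : Fin n), (i : ℕ) < k → k ≤ (j : ℕ) → ω (A t i) (A' t j) = 0)
    (hWkinv : ∀ t, IsUnit (Matrix.of fun i j : Fin k =>
      ω (A t (Fin.castLE hkn i)) (A' t (Fin.castLE hkn j))))
    -- a model of the symplectic reduction `(𝕎/𝕎^ω, ω_R)` with quotient map `π`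
    {Qv : Type*} [NormedAddCommGroup Qv] [NormedSpace ℝ Qv] [FiniteDimensional ℝ Qv]
    (π : Wsub →ₗ[ℝ] Qv) (hπsurj : Function.Surjective π)
    (hπker : LinearMap.ker π = (sympOrtho ω Wsub).comap Wsub.subtype)
    (ωR : Qv →ₗ[ℝ] Qv →ₗ[ℝ] ℝ)
    (hωR : ∀ u v : Wsub, ωR (π u) (π v) = ω u v)
    -- the fundamental endomorphism of the reduced frame `Ā` and its derivatives
    (FR FR' FR'' : ℝ → Qv →L[ℝ] Qv)
    (hFR0 : ∀ t (i : Fin k), FR t (π ⟨A t (Fin.castLE hkn i),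
      hmem t (Fin.castLE hkn i) i.isLt⟩) = 0)
    (hFR1 : ∀ t (i : Fin k), FR t (π ⟨A' t (Fin.castLE hkn i),
        hmem' t (Fin.castLE hkn i) i.isLt⟩) =
      π ⟨A t (Fin.castLE hkn i), hmem t (Fin.castLE hkn i) i.isLt⟩)
    (hFRd : ∀ t, HasDerivAt FR (FR' t) t)
    (hFRd' : ∀ t, HasDerivAt FR' (FR'' t) t)
    -- the projections onto `𝔥(t)` and `𝔳(t)` relative to `V = 𝔥(t) ⊕ 𝔳(t) ⊕ h(t)`
    (Ph Pv : ℝ → V →ₗ[ℝ] V)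
    (hPh1 : ∀ t (j : Fin n), (j : ℕ) < k → Ph t (A t j) = A t j)
    (hPh2 : ∀ t (j : Fin n), k ≤ (j : ℕ) → Ph t (A t j) = 0)
    (hPh3 : ∀ t j, Ph t (H t j) = 0)
    (hPv1 : ∀ t (j : Fin n), (j : ℕ) < k → Pv t (A t j) = 0)
    (hPv2 : ∀ t (j : Fin n), k ≤ (j : ℕ) → Pv t (A t j) = A t j)
    (hPv3 : ∀ t j, Pv t (H t j) = 0)
    -- the O'Neill endomorphism `𝐀(t)`
    (On : ℝ → V →ₗ[ℝ] V)
    (hOn1 : ∀ t (j : Fin n), (j : ℕ) < k → On t (A t j) = Pv t (A' t j))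
    (hOn2 : ∀ t (j : Fin n), k ≤ (j : ℕ) → On t (A t j) = -(Ph t (A' t j)))
    -- the Wronskian bilinear forms of `ℓ(t)` and of the reduced curve
    (Wb : ℝ → V →ₗ[ℝ] V →ₗ[ℝ] ℝ)
    (hWb : ∀ t i j, Wb t (A t i) (A t j) = ω (A t i) (A' t j))
    (WbR : ℝ → Qv →ₗ[ℝ] Qv →ₗ[ℝ] ℝ)
    (hWbR : ∀ t (i j : Fin k),
      WbR t (π ⟨A t (Fin.castLE hkn i), hmem t (Fin.castLE hkn i) i.isLt⟩)
        (π ⟨A t (Fin.castLE hkn j), hmem t (Fin.castLE hkn j) j.isLt⟩) =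
      ωR (π ⟨A t (Fin.castLE hkn i), hmem t (Fin.castLE hkn i) i.isLt⟩)
        (π ⟨A' t (Fin.castLE hkn j), hmem' t (Fin.castLE hkn j) j.isLt⟩)) :
    -- the O'Neill formula
    ∀ t (u : V),
      u ∈ Submodule.span ℝ {v | ∃ i : Fin n, (i : ℕ) < k ∧ v = A t i} →
      ∀ (huW : u ∈ Wsub),
        WbR t ((1/4 : ℝ) • FR'' t (FR'' t (π ⟨u, huW⟩))) (π ⟨u, huW⟩) =
          Wb t ((1/4 : ℝ) • F'' t (F'' t u)) u +
            3 * Wb t (On t u) (On t u) := by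
  intro t u hu huW
  obtain ⟨p, rfl⟩ := π.exists_extend
  have hfanning := IsFanning.of_contDiff (fun i => contDiff_infty.1 (hA i) 2) hA'
    fun s => (hfan s).2
  have hred : IsSymplecticReduction ω Wsub p.toContinuousLinearMap ωR :=
    ⟨hco, fun y _ => let ⟨w, hw⟩ := hπsurj y; ⟨w, w.2, hw⟩,
      fun w hw => SetLike.ext_iff.1 hπker ⟨w, hw⟩, fun u hu v hv => hωR ⟨u, hu⟩ ⟨v, hv⟩⟩
  have hQ : finrank ℝ Qv = 2 * Fintype.card (Fin k) := by
    have hω : ω.Nondegenerate :=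
      (LinearMap.IsAlt.isRefl halt).nondegenerate_iff_separatingLeft.2 hnd
    have := hred.finrank_add_two_mul_finrank_sympOrtho hω.2
    rw [Fintype.card_fin]
    omega
  have hrange (i : Fin n) (hi : i ∉ Set.range (Fin.castLE hkn)) : k ≤ (i : ℕ) :=
    not_lt.1 fun hik => hi ⟨⟨i, hik⟩, rfl⟩
  have hW : IsAdapted ω Wsub (Fin.castLE hkn) A A' :=
    ⟨fun s j => hmem s _ j.2, fun s j i hi => hblock s _ i j.2 (hrange i hi), hWkinv⟩
  have hPv : IsVerticalProjection (Fin.castLE hkn) (A t) (A' t) (F' t) (Pv t) :=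
    ⟨fun j => hPv1 t _ j.2, fun i hi => hPv2 t i (hrange i hi), fun i => hH t i ▸ hPv3 t i⟩
  have hu' : u ∈ span ℝ (Set.range fun j => A t (Fin.castLE hkn j)) :=
    span_mono (by rintro _ ⟨i, hi, rfl⟩; exact ⟨⟨i, hi⟩, rfl⟩) hu
  exact oneill_formula_symplectic_reduction_general halt hLag hfanning ⟨hF0, hF1, hFd, hFd'⟩
    hred hQ hW ⟨hFR0, hFR1, hFRd, hFRd'⟩ hPv (fun j => hOn1 t _ j.2) (hWb t) (hWbR t) hu'
end

section
/- Proposition 2.8, first part: Let A be a fanning frame with fundamental endomorphism F(t), horizontal frame H_i(t) = P_h(t)ȧ_i(t), and Schwarzian {A,t}. Then for all t and all j: (1/2)F̈(t)a_j(t) = −H_j(t) and (1/2)F̈(t)H_j(t) = −(1/2)Σ_i a_i(t)·{A,t}_{ij}. Equivalently, in the basis (a_1(t),…,a_n(t),H_1(t),…,H_n(t)) of V the matrix of (1/2)F̈(t) is the block matrix [[O, −(1/2){A,t}],[−I, O]]. -/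
/-!
Differentiating `F a = 0` and `F ȧ = a` gives `Ḟ a = -a` and, after eliminating `ä` through
`ä + ȧ P + a Q = 0`, `Ḟ ȧ = ȧ + a P`; hence the horizontal frame is `H = ȧ + (1/2) a P`.
Differentiating these two relations once more gives `F̈ a = -2 H` and
`F̈ ȧ = ȧ P + a (Ṗ + P² - 2 Q)`. In `F̈ H = F̈ ȧ + (1/2) (F̈ a) P` the terms `ȧ P` cancel, and what
is left is `-a {A,t}`.
-/

section

variable {𝕜 V ι : Type*} [NontriviallyNormedField 𝕜] [NormedAddCommGroup V] [NormedSpace 𝕜 V]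

/-- The Schwarzian `2 Q - (1/2) P² - Ṗ` of a frame with `ä + ȧ P + a Q = 0`, as a function of `P`,
`Q` and `Ṗ`. -/
def schwarzian [Fintype ι] (P Q P' : Matrix ι ι 𝕜) : Matrix ι ι 𝕜 :=
  (2 : 𝕜) • Q - (1 / 2 : 𝕜) • (P * P) - P'

lemma schwarzian_transpose [Fintype ι] (P Q P' : Matrix ι ι 𝕜) :
    schwarzian P.transpose Q.transpose P'.transpose = (schwarzian P Q P').transpose := by
  simp only [schwarzian, Matrix.transpose_sub, Matrix.transpose_smul, Matrix.transpose_mul]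

/-- The horizontal frame `H = P_h ȧ`, where `P_h = (1/2) (id + Ḟ)`, as a function of `Ḟ` and `ȧ`. -/
def horizontalFrame (F' : V →L[𝕜] V) (a' : ι → V) : ι → V :=
  fun j => (1 / 2 : 𝕜) • (a' j + F' (a' j))

section MatrixAction

open scoped Matrix.Module

variable [Fintype ι] [DecidableEq ι]

/-- The action of an operator on frames, vector by vector. It is linear over the matrices, that is,
it commutes with linear changes of frame. -/
def frameMap (f : V →L[𝕜] V) : (ι → V) →ₗ[Matrix ι ι 𝕜] (ι → V) :=
  f.toLinearMap.mapMatrixModule ι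

lemma frameMap_apply (f : V →L[𝕜] V) (a : ι → V) (i : ι) : frameMap f a i = f (a i) :=
  rfl

lemma schwarzian_smul (p q p' : Matrix ι ι 𝕜) (a : ι → V) :
    schwarzian p q p' • a = (2 : 𝕜) • q • a - (1 / 2 : 𝕜) • p • p • a - p' • a := by
  simp only [schwarzian, sub_smul, smul_assoc, mul_smul]

lemma horizontalFrame_eq_smul (f : V →L[𝕜] V) (a' : ι → V) :
    horizontalFrame f a' = (1 / 2 : 𝕜) • (a' + frameMap f a') :=
  rfl

lemma hasDerivAt_frameMap {F : 𝕜 → V →L[𝕜] V} {F' : V →L[𝕜] V} {a : 𝕜 → ι → V} {a' : ι → V}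
    {t : 𝕜} (hF : HasDerivAt F F' t) (ha : HasDerivAt a a' t) :
    HasDerivAt (fun s => frameMap (F s) (a s)) (frameMap F' (a t) + frameMap (F t) a') t :=
  hasDerivAt_pi.2 fun i => hF.clm_apply (hasDerivAt_pi.1 ha i)

lemma hasDerivAt_matrix_smul {N : 𝕜 → Matrix ι ι 𝕜} {N' : Matrix ι ι 𝕜} {a : 𝕜 → ι → V}
    {a' : ι → V} {t : 𝕜} (hN : ∀ i j, HasDerivAt (fun s => N s i j) (N' i j) t)
    (ha : HasDerivAt a a' t) :
    HasDerivAt (fun s => N s • a s) (N t • a' + N' • a t) t := by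
  refine hasDerivAt_pi.2 fun i => ?_
  simp only [Pi.add_apply, Matrix.Module.smul_apply, ← Finset.sum_add_distrib]
  exact HasDerivAt.fun_sum fun j _ => (hN i j).fun_smul (hasDerivAt_pi.1 ha j)

/-- The relations `F a = 0` and `F ȧ = a` that define the fundamental endomorphism `F` of a frame
`a` with velocity `a' = ȧ`. They determine `F` as soon as `a` and `a'` together span `V`. -/
structure IsFundamentalEndomorphism_s1 (F : V →L[𝕜] V) (a a' : ι → V) : Prop where
  frameMap_frame : frameMap F a = 0
  frameMap_velocity : frameMap F a' = a

namespace IsFundamentalEndomorphism_s1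

-- `Matrix.Module` has matrices act on frames from the left, so that `a P` is `Pᵀ • a`: the
-- coefficients `p`, `q` stand for `Pᵀ`, `Qᵀ`.
variable {F F' : 𝕜 → V →L[𝕜] V} {F'' : V →L[𝕜] V} {a a' a'' : 𝕜 → ι → V}
  {p q : 𝕜 → Matrix ι ι 𝕜} {p' : Matrix ι ι 𝕜} {t : 𝕜}

lemma frameMap_deriv_frame (hF : ∀ t, IsFundamentalEndomorphism_s1 (F t) (a t) (a' t))
    (hFd : HasDerivAt F (F' t) t) (ha : HasDerivAt a (a' t) t) :
    frameMap (F' t) (a t) = -a t := by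
  have hderiv := hasDerivAt_frameMap hFd ha
  simp only [(hF _).frameMap_frame, (hF _).frameMap_velocity] at hderiv
  exact eq_neg_of_add_eq_zero_left (hderiv.unique (hasDerivAt_const t 0))

lemma frameMap_deriv_velocity (hF : ∀ t, IsFundamentalEndomorphism_s1 (F t) (a t) (a' t))
    (hFd : HasDerivAt F (F' t) t) (ha : HasDerivAt a (a' t) t) (ha' : HasDerivAt a' (a'' t) t)
    (hpq : a'' t = -(p t • a' t + q t • a t)) :
    frameMap (F' t) (a' t) = a' t + p t • a t := by
  have hderiv := hasDerivAt_frameMap hFd ha'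
  simp only [(hF _).frameMap_velocity] at hderiv
  have hF_a'' : frameMap (F t) (a'' t) = -(p t • a t) := by
    rw [hpq, map_neg, map_add, map_smul, map_smul, (hF t).frameMap_velocity,
      (hF t).frameMap_frame, smul_zero, add_zero]
  rw [eq_sub_of_add_eq (hderiv.unique ha), hF_a'', sub_neg_eq_add]

lemma horizontalFrame_eq_velocity_add [NeZero (2 : 𝕜)]
    (hF : ∀ t, IsFundamentalEndomorphism_s1 (F t) (a t) (a' t))
    (hFd : HasDerivAt F (F' t) t) (ha : HasDerivAt a (a' t) t) (ha' : HasDerivAt a' (a'' t) t)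
    (hpq : a'' t = -(p t • a' t + q t • a t)) :
    horizontalFrame (F' t) (a' t) = a' t + (1 / 2 : 𝕜) • p t • a t := by
  rw [horizontalFrame_eq_smul, frameMap_deriv_velocity hF hFd ha ha' hpq, ← add_assoc,
    ← two_smul 𝕜, smul_add, smul_smul, one_div_mul_cancel two_ne_zero, one_smul]

lemma frameMap_second_deriv_frame [NeZero (2 : 𝕜)]
    (hF : ∀ t, IsFundamentalEndomorphism_s1 (F t) (a t) (a' t))
    (hFd : ∀ t, HasDerivAt F (F' t) t) (hFd' : HasDerivAt F' F'' t)
    (ha : ∀ t, HasDerivAt a (a' t) t) :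
    frameMap F'' (a t) = -((2 : 𝕜) • horizontalFrame (F' t) (a' t)) := by
  have hderiv := hasDerivAt_frameMap hFd' (ha t)
  simp only [frameMap_deriv_frame hF (hFd _) (ha _)] at hderiv
  have hsum := hderiv.unique (ha t).neg
  rw [eq_sub_of_add_eq hsum, horizontalFrame_eq_smul, smul_smul, mul_one_div_cancel two_ne_zero,
    one_smul, neg_add']

lemma frameMap_second_deriv_velocity
    (hF : ∀ t, IsFundamentalEndomorphism_s1 (F t) (a t) (a' t))
    (hFd : ∀ t, HasDerivAt F (F' t) t) (hFd' : HasDerivAt F' F'' t)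
    (ha : ∀ t, HasDerivAt a (a' t) t) (ha' : ∀ t, HasDerivAt a' (a'' t) t)
    (hpq : ∀ t, a'' t = -(p t • a' t + q t • a t))
    (hp : ∀ i j, HasDerivAt (fun s => p s i j) (p' i j) t) :
    frameMap F'' (a' t) = p t • a' t + p' • a t + p t • p t • a t - (2 : 𝕜) • q t • a t := by
  have hframe := frameMap_deriv_frame hF (hFd t) (ha t)
  have hvelocity (s : 𝕜) := frameMap_deriv_velocity hF (hFd s) (ha s) (ha' s) (hpq s)
  have hderiv := hasDerivAt_frameMap hFd' (ha' t)
  simp only [hvelocity] at hderiv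
  have hsum := hderiv.unique ((ha' t).add (hasDerivAt_matrix_smul hp (ha t)))
  rw [eq_sub_of_add_eq hsum, hpq]
  simp only [map_neg, map_add, map_smul, hframe, hvelocity, smul_add, smul_neg, two_smul]
  abel

lemma frameMap_second_deriv_horizontalFrame [NeZero (2 : 𝕜)]
    (hF : ∀ t, IsFundamentalEndomorphism_s1 (F t) (a t) (a' t))
    (hFd : ∀ t, HasDerivAt F (F' t) t) (hFd' : HasDerivAt F' F'' t)
    (ha : ∀ t, HasDerivAt a (a' t) t) (ha' : ∀ t, HasDerivAt a' (a'' t) t)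
    (hpq : ∀ t, a'' t = -(p t • a' t + q t • a t))
    (hp : ∀ i j, HasDerivAt (fun s => p s i j) (p' i j) t) :
    frameMap F'' (horizontalFrame (F' t) (a' t)) = -(schwarzian (p t) (q t) p' • a t) := by
  have hH := horizontalFrame_eq_velocity_add hF (hFd t) (ha t) (ha' t) (hpq t)
  have half_sub (x : ι → V) : x - (1 / 2 : 𝕜) • x = (1 / 2 : 𝕜) • x := by
    rw [sub_eq_iff_eq_add, ← add_smul, add_halves, one_smul]
  calc frameMap F'' (horizontalFrame (F' t) (a' t))
      = frameMap F'' (a' t) + (1 / 2 : 𝕜) • p t • frameMap F'' (a t) := by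
        rw [hH, map_add, LinearMap.map_smul_of_tower, map_smul]
    _ = frameMap F'' (a' t) - p t • horizontalFrame (F' t) (a' t) := by
        rw [frameMap_second_deriv_frame hF hFd hFd' ha, smul_neg, smul_comm (p t), smul_neg,
          smul_smul, one_div_mul_cancel two_ne_zero, one_smul, sub_eq_add_neg]
    _ = p' • a t + (p t • p t • a t - (1 / 2 : 𝕜) • p t • p t • a t) - (2 : 𝕜) • q t • a t := by
        rw [frameMap_second_deriv_velocity hF hFd hFd' ha ha' hpq hp, hH, smul_add,
          smul_comm (p t) (1 / 2 : 𝕜)]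
        abel
    _ = -(schwarzian (p t) (q t) p' • a t) := by
        rw [half_sub, schwarzian_smul]
        abel

end IsFundamentalEndomorphism_s1

end MatrixAction

open IsFundamentalEndomorphism_s1 Matrix.Module in
theorem prop2_8_first_part_general [NeZero (2 : 𝕜)] [Fintype ι]
    (A A' A'' : 𝕜 → ι → V)
    (hA' : ∀ i t, HasDerivAt (fun s => A s i) (A' t i) t)
    (hA'' : ∀ i t, HasDerivAt (fun s => A' s i) (A'' t i) t)
    (F F' F'' : 𝕜 → V →L[𝕜] V)
    (hF0 : ∀ t i, F t (A t i) = 0)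
    (hF1 : ∀ t i, F t (A' t i) = A t i)
    (hFd : ∀ t, HasDerivAt F (F' t) t)
    (hFd' : ∀ t, HasDerivAt F' (F'' t) t)
    (P Q P' : 𝕜 → Matrix ι ι 𝕜)
    (hPQ : ∀ t j, A'' t j + ∑ i, P t i j • A' t i + ∑ i, Q t i j • A t i = 0)
    (hPd : ∀ i j t, HasDerivAt (fun s => P s i j) (P' t i j) t) (t : 𝕜) (j : ι) :
    (1 / 2 : 𝕜) • F'' t (A t j) = -horizontalFrame (F' t) (A' t) j ∧
      (1 / 2 : 𝕜) • F'' t (horizontalFrame (F' t) (A' t) j) =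
        -((1 / 2 : 𝕜) • ∑ i, schwarzian (P t) (Q t) (P' t) i j • A t i) := by
  classical
  have hF (t) : IsFundamentalEndomorphism_s1 (F t) (A t) (A' t) := ⟨funext (hF0 t), funext (hF1 t)⟩
  have hA (t) : HasDerivAt A (A' t) t := hasDerivAt_pi.2 (hA' · t)
  have hVel (t) : HasDerivAt A' (A'' t) t := hasDerivAt_pi.2 (hA'' · t)
  have hpq (t) : A'' t = -((P t).transpose • A' t + (Q t).transpose • A t) :=
    eq_neg_of_add_eq_zero_left ((add_assoc _ _ _).symm.trans (funext (hPQ t)))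
  have hp (i j) : HasDerivAt (fun s => (P s).transpose i j) ((P' t).transpose i j) t := hPd j i t
  have hframe := frameMap_second_deriv_frame hF hFd (hFd' t) hA
  have hhorizontal := frameMap_second_deriv_horizontalFrame hF hFd (hFd' t) hA hVel hpq hp
  rw [schwarzian_transpose] at hhorizontal
  refine ⟨?_, ?_⟩
  · rw [← frameMap_apply, hframe, Pi.neg_apply, Pi.smul_apply, smul_neg, smul_smul,
      one_div_mul_cancel two_ne_zero, one_smul]
  · rw [← frameMap_apply, hhorizontal, Pi.neg_apply, smul_neg]
    rfl

end

/-- **Proposition 2.8, first part.**  For a fanning frame `A` in a `2n`-dimensional real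
vector space `V`, with fundamental endomorphism `F(t)` (given together with its first and
second derivatives `F'`, `F''`), horizontal frame `H_j(t) = P_h(t) ȧ_j(t)` and Schwarzian
`{A,t} = 2Q − (1/2)P² − Ṗ`, one has, for all `t` and `j`:
`(1/2) F̈(t) a_j(t) = − H_j(t)` and `(1/2) F̈(t) H_j(t) = −(1/2) Σ_i a_i(t) {A,t}_{ij}`. -/
theorem prop2_8_first_part
    {V : Type*} [NormedAddCommGroup V] [NormedSpace ℝ V] [FiniteDimensional ℝ V]
    {n : ℕ} (hn : 0 < n) (hdim : Module.finrank ℝ V = 2 * n)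
    (A A' A'' : ℝ → Fin n → V)
    (hA : ∀ i, ContDiff ℝ (⊤ : ℕ∞) (fun t => A t i))
    (hA' : ∀ i t, HasDerivAt (fun s => A s i) (A' t i) t)
    (hA'' : ∀ i t, HasDerivAt (fun s => A' s i) (A'' t i) t)
    (hfan : ∀ t, LinearIndependent ℝ (Sum.elim (A t) (A' t)) ∧
      Submodule.span ℝ (Set.range (Sum.elim (A t) (A' t))) = ⊤)
    (F F' F'' : ℝ → V →L[ℝ] V)
    (hF0 : ∀ t i, F t (A t i) = 0)
    (hF1 : ∀ t i, F t (A' t i) = A t i)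
    (hFd : ∀ t, HasDerivAt F (F' t) t)
    (hFd' : ∀ t, HasDerivAt F' (F'' t) t)
    (P Q P' : ℝ → Matrix (Fin n) (Fin n) ℝ)
    (hPQ : ∀ t j, A'' t j + ∑ i, P t i j • A' t i + ∑ i, Q t i j • A t i = 0)
    (hPd : ∀ i j t, HasDerivAt (fun s => P s i j) (P' t i j) t)
    (Sch : ℝ → Matrix (Fin n) (Fin n) ℝ)
    (hSch : ∀ t, Sch t = (2 : ℝ) • Q t - (1/2 : ℝ) • (P t * P t) - P' t) :
    ∀ t j,
      (1/2 : ℝ) • F'' t (A t j) = -((1/2 : ℝ) • (A' t j + F' t (A' t j))) ∧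
      (1/2 : ℝ) • F'' t ((1/2 : ℝ) • (A' t j + F' t (A' t j))) =
        -((1/2 : ℝ) • ∑ i, Sch t i j • A t i) := by
  intro t j
  rw [hSch]
  exact prop2_8_first_part_general A A' A'' hA' hA'' F F' F'' hF0 hF1 hFd hFd' P Q P' hPQ hPd t j
end

section
/- Proposition 2.12(1): Let ω be a symplectic bilinear form on V and A a Lagrangian fanning frame. Then, for every t, the fundamental endomorphism F(t) lies in the symplectic Lie algebra of (V, ω): ω(F(t)u, v) + ω(u, F(t)v) = 0 for all u, v ∈ V. -/
/-!
Differentiating `ω(aᵢ, aⱼ) = 0` gives `ω(aᵢ, ȧⱼ) + ω(ȧᵢ, aⱼ) = 0`. Since `F aᵢ = 0` and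
`F ȧᵢ = aᵢ`, this is the skew-adjointness of `F` on the pair `(ȧᵢ, ȧⱼ)`. On the pairs that involve
some `aᵢ` it reduces to `ω(aᵢ, aⱼ) = 0`, or to `0 = 0`. By bilinearity it extends to the span.
-/

open LinearMap Submodule Set Topology

section LinearAlgebra

theorem isAdjointPair_of_span_eq_top {R M M₁ M₃ : Type*} [CommSemiring R]
    [AddCommMonoid M] [Module R M] [AddCommMonoid M₁] [Module R M₁]
    [AddCommMonoid M₃] [Module R M₃] {I : R →+* R}
    {B : M →ₗ[R] M →ₛₗ[I] M₃} {B' : M₁ →ₗ[R] M₁ →ₛₗ[I] M₃}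
    {f : M →ₗ[R] M₁} {g : M₁ →ₗ[R] M} {s : Set M} {s₁ : Set M₁}
    (hs : span R s = ⊤) (hs₁ : span R s₁ = ⊤)
    (h : ∀ x ∈ s, ∀ y ∈ s₁, B' (f x) y = B x (g y)) : IsAdjointPair B B' f g :=
  isAdjointPair_iff_comp_eq_compl₂.2 <|
    LinearMap.ext_on hs fun x hx => LinearMap.ext_on hs₁ fun y hy => h x hx y hy

variable {R M M₂ ι : Type*} [CommRing R] [AddCommGroup M] [Module R M]
  [AddCommGroup M₂] [Module R M₂] {B : M →ₗ[R] M →ₗ[R] M₂} {F : M →ₗ[R] M}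

theorem isSkewAdjoint_of_span_eq_top {s : Set M} (hs : span R s = ⊤)
    (h : ∀ x ∈ s, ∀ y ∈ s, B (F x) y + B x (F y) = 0) : B.IsSkewAdjoint F := by
  refine isAdjointPair_of_span_eq_top (g := -F) hs hs fun x hx y hy => ?_
  rw [LinearMap.neg_apply, map_neg]
  exact eq_neg_of_add_eq_zero_left (h x hx y hy)

theorem isSkewAdjoint_of_isotropic {a a' : ι → M}
    (hspan : span R (range (Sum.elim a a')) = ⊤)
    (hFa : ∀ i, F (a i) = 0) (hFa' : ∀ i, F (a' i) = a i)
    (haa : ∀ i j, B (a i) (a j) = 0) (haa' : ∀ i j, B (a i) (a' j) + B (a' i) (a j) = 0) :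
    B.IsSkewAdjoint F := by
  refine isSkewAdjoint_of_span_eq_top hspan ?_
  rintro _ ⟨i | i, rfl⟩ _ ⟨j | j, rfl⟩ <;>
    simp only [Sum.elim_inl, Sum.elim_inr, hFa, hFa', haa, haa', map_zero, LinearMap.zero_apply,
      add_zero]

end LinearAlgebra

section Calculus

variable {𝕜 E E₁ G : Type*} [NontriviallyNormedField 𝕜]
  [NormedAddCommGroup E] [NormedSpace 𝕜 E] [NormedAddCommGroup E₁] [NormedSpace 𝕜 E₁]
  [NormedAddCommGroup G] [NormedSpace 𝕜 G]

theorem bilin_deriv_add_eq_zero_of_eventually_eq_const (B : E →L[𝕜] E₁ →L[𝕜] G)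
    {u : 𝕜 → E} {v : 𝕜 → E₁} {u' : E} {v' : E₁} {t : 𝕜} {c : G}
    (hu : HasDerivAt u u' t) (hv : HasDerivAt v v' t) (hc : ∀ᶠ s in 𝓝 t, B (u s) (v s) = c) :
    B (u t) v' + B u' (v t) = 0 :=
  (B.hasDerivAt_of_bilinear (fun _ => hu) fun _ => hv).unique
    ((hasDerivAt_const t c).congr_of_eventuallyEq hc)

theorem prop2_12_part1_general {ι : Type*} (B : E →L[𝕜] E →L[𝕜] G)
    {A : 𝕜 → ι → E} {A' : ι → E} {t : 𝕜} {F : E →ₗ[𝕜] E}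
    (hA' : ∀ i, HasDerivAt (fun s => A s i) (A' i) t)
    (hspan : span 𝕜 (range (Sum.elim (A t) A')) = ⊤)
    (hiso : ∀ i j, ∀ᶠ s in 𝓝 t, B (A s i) (A s j) = 0)
    (hFA : ∀ i, F (A t i) = 0) (hFA' : ∀ i, F (A' i) = A t i) (u v : E) :
    B (F u) v + B u (F v) = 0 := by
  have hskew : B.toLinearMap₁₂.IsSkewAdjoint F :=
    isSkewAdjoint_of_isotropic hspan hFA hFA' (fun i j => (hiso i j).self_of_nhds) fun i j =>
      bilin_deriv_add_eq_zero_of_eventually_eq_const B (hA' i) (hA' j) (hiso i j)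
  have huv : B (F u) v = B u (-F v) := hskew u v
  rw [huv, map_neg, neg_add_cancel]

end Calculus

/-- **Proposition 2.12(1).**  If `ω` is a symplectic bilinear form on the `2n`-dimensional
real vector space `V` and `A` is a Lagrangian fanning frame, then the fundamental
endomorphism `F(t)` lies in the symplectic Lie algebra:
`ω(F(t)u, v) + ω(u, F(t)v) = 0` for all `u, v ∈ V` and all `t`. -/
theorem prop2_12_part1
    {V : Type*} [NormedAddCommGroup V] [NormedSpace ℝ V] [FiniteDimensional ℝ V]
    {n : ℕ} (hn : 0 < n) (hdim : Module.finrank ℝ V = 2 * n)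
    (ω : V →ₗ[ℝ] V →ₗ[ℝ] ℝ)
    (halt : ∀ v, ω v v = 0)
    (hnd : ∀ v, (∀ w, ω v w = 0) → v = 0)
    (A A' : ℝ → Fin n → V)
    (hA : ∀ i, ContDiff ℝ (⊤ : ℕ∞) (fun t => A t i))
    (hA' : ∀ i t, HasDerivAt (fun s => A s i) (A' t i) t)
    (hfan : ∀ t, LinearIndependent ℝ (Sum.elim (A t) (A' t)) ∧
      Submodule.span ℝ (Set.range (Sum.elim (A t) (A' t))) = ⊤)
    (hLag : ∀ t i j, ω (A t i) (A t j) = 0)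
    (F : ℝ → V →L[ℝ] V)
    (hF0 : ∀ t i, F t (A t i) = 0)
    (hF1 : ∀ t i, F t (A' t i) = A t i) :
    ∀ t (u v : V), ω (F t u) v + ω u (F t v) = 0 := by
  exact fun t => prop2_12_part1_general ω.toContinuousBilinearMap (F := F t) (fun i => hA' i t)
    (hfan t).2 (fun i j => .of_forall fun s => hLag s i j) (hF0 t) (hF1 t)
end

section
/- Proposition 2.14(2) (transformation under reparametrization): Let ω be a symplectic bilinear form on V, A a Lagrangian fanning frame, and s : ℝ → ℝ a smooth function with ṡ(t) ≠ 0 for all t. Let B be the reparametrized frame b_i(t) = a_i(s(t)). Then B is a Lagrangian fanning frame, its Wronskian matrix satisfies W_B(t) = ṡ(t)·W_A(s(t)), and its Jacobi endomorphism satisfies K_B(t) = ṡ(t)²·K_A(s(t)) + (1/2){s(t),t}·id_V, where {s(t),t} = (d/dt)(s̈(t)/ṡ(t)) − (1/2)(s̈(t)/ṡ(t))² is the Schwarzian derivative of s. -/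
/-!
The fundamental endomorphism satisfies `F ^ 2 = 0` and `ker F = ℓ`. Differentiating `F aᵢ = 0` gives
`F' = -1` on `ℓ`, and differentiating `F ^ 2 = 0` gives `F (F' - 1) = 0`, so `F' - 1` takes values
in `ℓ`; hence `F'` is a reflection. Differentiating `F ^ 2 = 0` and `F' ^ 2 = 1` yields all the
anticommutators of `F`, `F'`, `F''`. By uniqueness the fundamental endomorphism of the
reparametrized frame is `F_B = (F ∘ s) / s'`, so with `r = s'' / s'`
`F_B'' = s' F'' - r F' - ((r' - r ^ 2) / s') F` (`F`, `F'`, `F''` taken at `s`). In the square of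
the right-hand side the anticommutators leave only `s' ^ 2 F'' ^ 2` and a multiple of the identity.
-/

section Frame

variable {K V ι : Type*} [Field K] [AddCommGroup V] [Module K V]

/-- The condition that a frame `a` with velocity `a'` is fanning at a given instant: the vectors of
`a` and `a'` together form a basis of `V`. It is a conjunction rather than a `Module.Basis` since it
is imposed on given families of vectors. -/
def IsFanning_s7 (K : Type*) {V ι : Type*} [Field K] [AddCommGroup V] [Module K V]
    (a a' : ι → V) : Prop :=
  LinearIndependent K (Sum.elim a a') ∧ Submodule.span K (Set.range (Sum.elim a a')) = ⊤

/-- The defining property of the fundamental endomorphism of a frame with value `a` and velocity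
`a'` at a given instant. It is a predicate, since existence and uniqueness need the frame to be
fanning. -/
structure IsFundamentalEndomorphism_s7 (a a' : ι → V) (f : Module.End K V) : Prop where
  apply_frame : ∀ i, f (a i) = 0
  apply_velocity : ∀ i, f (a' i) = a i

variable {a a' : ι → V} {f g : Module.End K V}

theorem IsFanning_s7.span_sup_span (h : IsFanning_s7 K a a') :
    Submodule.span K (Set.range a) ⊔ Submodule.span K (Set.range a') = ⊤ := by
  rw [← Submodule.span_union, ← Set.Sum.elim_range, h.2]

theorem IsFanning_s7.smul_velocity (h : IsFanning_s7 K a a') {c : K} (hc : c ≠ 0) :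
    IsFanning_s7 K a (c • a') := by
  let u : ι ⊕ ι → Kˣ := Sum.elim 1 fun _ => Units.mk0 c hc
  have hu : u • Sum.elim a a' = Sum.elim a (c • a') := by
    ext (i | i) <;> simp [u, Units.smul_def]
  rw [IsFanning_s7, ← hu]
  exact ⟨h.1.units_smul u, Module.Basis.units_smul_span_eq_top h.2⟩

namespace IsFundamentalEndomorphism_s7

theorem smul_velocity (hf : IsFundamentalEndomorphism_s7 a a' f) {c : K} (hc : c ≠ 0) :
    IsFundamentalEndomorphism_s7 a (c • a') (c⁻¹ • f) where
  apply_frame i := by simp [hf.apply_frame]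
  apply_velocity i := by simp [hf.apply_velocity, hc]

theorem unique (h : IsFanning_s7 K a a') (hf : IsFundamentalEndomorphism_s7 a a' f)
    (hg : IsFundamentalEndomorphism_s7 a a' g) : f = g := by
  refine LinearMap.ext_on_range h.2 ?_
  rintro (i | i)
  · simp [hf.apply_frame, hg.apply_frame]
  · simp [hf.apply_velocity, hg.apply_velocity]

theorem mul_self_s7 (h : IsFanning_s7 K a a') (hf : IsFundamentalEndomorphism_s7 a a' f) : f * f = 0 := by
  refine LinearMap.ext_on_range h.2 ?_
  rintro (i | i) <;> simp [hf.apply_frame, hf.apply_velocity]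

theorem ker_eq_span (h : IsFanning_s7 K a a') (hf : IsFundamentalEndomorphism_s7 a a' f) :
    LinearMap.ker f = Submodule.span K (Set.range a) := by
  have hle : Submodule.span K (Set.range a) ≤ LinearMap.ker f :=
    Submodule.span_le.2 (Set.range_subset_iff.2 hf.apply_frame)
  have hli : LinearIndependent K (f ∘ a') := by
    rw [show f ∘ a' = a from funext hf.apply_velocity]
    exact h.1.comp Sum.inl Sum.inl_injective
  have hdisj : Disjoint (LinearMap.ker f) (Submodule.span K (Set.range a')) :=
    (Submodule.range_ker_disjoint hli).symm
  exact (eq_of_le_of_inf_le_of_le_sup hle (hdisj.eq_bot.trans_le bot_le)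
    (le_top.trans_eq h.span_sup_span.symm)).symm

end IsFundamentalEndomorphism_s7

end Frame

section NormedAlgebra

variable {𝕜 R : Type*} [NontriviallyNormedField 𝕜] [NormedRing R] [NormedAlgebra 𝕜 R]
  {F F' F'' : 𝕜 → R}

theorem anticommutator_deriv_eq_zero_of_mul_self_eq_const {c : R}
    (hF : ∀ t, HasDerivAt F (F' t) t) (hc : ∀ t, F t * F t = c) (t : 𝕜) :
    F' t * F t + F t * F' t = 0 := by
  have hd : HasDerivAt (fun _ => c) (F' t * F t + F t * F' t) t := by
    simpa only [funext hc, Pi.mul_def] using (hF t).mul (hF t)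
  exact hd.unique (hasDerivAt_const t c)

theorem anticommutator_deriv_deriv_eq_neg_two
    (hF : ∀ t, HasDerivAt F (F' t) t) (hF' : ∀ t, HasDerivAt F' (F'' t) t)
    (hsq : ∀ t, F t * F t = 0) (hsq' : ∀ t, F' t * F' t = 1) (t : 𝕜) :
    F'' t * F t + F t * F'' t = -2 := by
  have hanti := anticommutator_deriv_eq_zero_of_mul_self_eq_const hF hsq
  have hd : HasDerivAt (fun _ => (0 : R))
      (F'' t * F t + F' t * F' t + (F' t * F' t + F t * F'' t)) t := by
    simpa only [Pi.mul_def, Pi.add_def, hanti] using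
      ((hF' t).mul (hF t)).add ((hF t).mul (hF' t))
  have hzero := hd.unique (hasDerivAt_const t 0)
  rw [hsq'] at hzero
  rw [← sub_eq_zero, ← hzero, ← one_add_one_eq_two]
  abel

end NormedAlgebra

theorem sub_smul_sub_smul_mul_self {k R : Type*} [CommRing k] [Ring R] [Algebra k R]
    {e i j : R} (he : e * e = 0) (hi : i * i = 1) (hie : i * e + e * i = 0)
    (hje : j * e + e * j = -2) (hji : j * i + i * j = 0) (p x c : k) :
    (p • j - x • i - c • e) * (p • j - x • i - c • e) =
      p ^ 2 • (j * j) + (x ^ 2 + 2 * (p * c)) • (1 : R) := by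
  have hje' : j * e + e * j = (-2 : k) • (1 : R) := by
    rw [hje, neg_smul, two_smul, one_add_one_eq_two]
  simp only [sub_mul, mul_sub, smul_mul_smul_comm]
  linear_combination (norm := module)
    c ^ 2 • he + x ^ 2 • hi + (x * c) • hie - (p * c) • hje' - (p * x) • hji

section Reparametrization

variable {𝕜 : Type*} [NontriviallyNormedField 𝕜] {s s' r r' : 𝕜 → 𝕜}

theorem hasDerivAt_inv_of_logDeriv {t : 𝕜} (hs' : HasDerivAt s' (r t * s' t) t)
    (hne : s' t ≠ 0) : HasDerivAt (fun u => (s' u)⁻¹) (-(r t * (s' t)⁻¹)) t := by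
  refine (hs'.fun_inv hne).congr_deriv ?_
  field_simp

section NormedSpace

variable {E : Type*} [NormedAddCommGroup E] [NormedSpace 𝕜 E] {F F' F'' : 𝕜 → E} {t : 𝕜}

theorem hasDerivAt_inv_smul_comp (hF : HasDerivAt F (F' (s t)) (s t))
    (hs : HasDerivAt s (s' t) t) (hs' : HasDerivAt s' (r t * s' t) t) (hne : s' t ≠ 0) :
    HasDerivAt (fun u => (s' u)⁻¹ • F (s u))
      (F' (s t) - (r t * (s' t)⁻¹) • F (s t)) t := by
  refine ((hasDerivAt_inv_of_logDeriv hs' hne).smul (hF.scomp t hs)).congr_deriv ?_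
  simp only [Function.comp_apply, inv_smul_smul₀ hne]
  module

theorem hasDerivAt_comp_sub_smul_comp (hF : HasDerivAt F (F' (s t)) (s t))
    (hF' : HasDerivAt F' (F'' (s t)) (s t)) (hs : HasDerivAt s (s' t) t)
    (hs' : HasDerivAt s' (r t * s' t) t) (hne : s' t ≠ 0) (hr : HasDerivAt r (r' t) t) :
    HasDerivAt (fun u => F' (s u) - (r u * (s' u)⁻¹) • F (s u))
      (s' t • F'' (s t) - r t • F' (s t) - ((r' t - r t ^ 2) * (s' t)⁻¹) • F (s t)) t := by
  have hcoeff := hr.fun_mul (hasDerivAt_inv_of_logDeriv hs' hne)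
  refine ((hF'.scomp t hs).sub (hcoeff.smul (hF.scomp t hs))).congr_deriv ?_
  have hcancel : (r t * (s' t)⁻¹) • s' t • F' (s t) = r t • F' (s t) := by
    rw [mul_smul, inv_smul_smul₀ hne]
  simp only [Function.comp_apply, hcancel]
  module

end NormedSpace

theorem second_deriv_inv_smul_comp_mul_self {R : Type*} [NormedRing R] [NormedAlgebra 𝕜 R]
    {F F' F'' G' G'' : 𝕜 → R}
    (hF : ∀ t, HasDerivAt F (F' t) t) (hF' : ∀ t, HasDerivAt F' (F'' t) t)
    (hsq : ∀ t, F t * F t = 0) (hsq' : ∀ t, F' t * F' t = 1)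
    (hs : ∀ t, HasDerivAt s (s' t) t) (hs' : ∀ t, HasDerivAt s' (r t * s' t) t)
    (hne : ∀ t, s' t ≠ 0) (hr : ∀ t, HasDerivAt r (r' t) t)
    (hG : ∀ t, HasDerivAt (fun u => (s' u)⁻¹ • F (s u)) (G' t) t)
    (hG' : ∀ t, HasDerivAt G' (G'' t) t) (t : 𝕜) :
    G'' t * G'' t = s' t ^ 2 • (F'' (s t) * F'' (s t)) + (2 * r' t - r t ^ 2) • (1 : R) := by
  have hG'_eq : G' = fun u => F' (s u) - (r u * (s' u)⁻¹) • F (s u) := funext fun u =>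
    (hG u).unique (hasDerivAt_inv_smul_comp (hF _) (hs u) (hs' u) (hne u))
  have hG''_eq : G'' t =
      s' t • F'' (s t) - r t • F' (s t) - ((r' t - r t ^ 2) * (s' t)⁻¹) • F (s t) :=
    (hG' t).unique <| hG'_eq ▸
      hasDerivAt_comp_sub_smul_comp (hF _) (hF' _) (hs t) (hs' t) (hne t) (hr t)
  rw [hG''_eq, sub_smul_sub_smul_mul_self (hsq _) (hsq' _)
    (anticommutator_deriv_eq_zero_of_mul_self_eq_const hF hsq _)
    (anticommutator_deriv_deriv_eq_neg_two hF hF' hsq hsq' _)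
    (anticommutator_deriv_eq_zero_of_mul_self_eq_const hF' hsq' _)]
  have hcoeff : r t ^ 2 + 2 * (s' t * ((r' t - r t ^ 2) * (s' t)⁻¹)) = 2 * r' t - r t ^ 2 := by
    have := hne t
    field_simp
    ring
  rw [hcoeff]

end Reparametrization

section FanningFrame

variable {𝕜 V ι : Type*} [NontriviallyNormedField 𝕜] [NormedAddCommGroup V] [NormedSpace 𝕜 V]
  {A A' : 𝕜 → ι → V} {F F' : 𝕜 → V →L[𝕜] V}

theorem deriv_fundamentalEndomorphism_apply_frame
    (hA : ∀ i t, HasDerivAt (fun u => A u i) (A' t i) t)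
    (hF : ∀ t, IsFundamentalEndomorphism_s7 (A t) (A' t) (F t : Module.End 𝕜 V))
    (hF' : ∀ t, HasDerivAt F (F' t) t) (t : 𝕜) (i : ι) : F' t (A t i) = -A t i := by
  have hconst : (fun u => F u (A u i)) = fun _ => 0 := funext fun u => (hF u).apply_frame i
  have hd : HasDerivAt (fun _ => (0 : V)) (F' t (A t i) + F t (A' t i)) t :=
    hconst ▸ (hF' t).clm_apply (hA i t)
  have hvel : F t (A' t i) = A t i := (hF t).apply_velocity i
  rw [hvel] at hd
  exact eq_neg_of_add_eq_zero_left (hd.unique (hasDerivAt_const t 0))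

theorem deriv_fundamentalEndomorphism_apply_of_apply_eq_zero
    (hA : ∀ i t, HasDerivAt (fun u => A u i) (A' t i) t) (hfan : ∀ t, IsFanning_s7 𝕜 (A t) (A' t))
    (hF : ∀ t, IsFundamentalEndomorphism_s7 (A t) (A' t) (F t : Module.End 𝕜 V))
    (hF' : ∀ t, HasDerivAt F (F' t) t) {t : 𝕜} {v : V} (hv : F t v = 0) : F' t v = -v := by
  have hmem : v ∈ Submodule.span 𝕜 (Set.range (A t)) := by
    rw [← (hF t).ker_eq_span (hfan t)]
    exact hv
  have heq : Set.EqOn (F' t : V →ₗ[𝕜] V) (-LinearMap.id : V →ₗ[𝕜] V) (Set.range (A t)) := by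
    rintro _ ⟨i, rfl⟩
    exact deriv_fundamentalEndomorphism_apply_frame hA hF hF' t i
  exact LinearMap.eqOn_span heq hmem

theorem fundamentalEndomorphism_mul_self (hfan : ∀ t, IsFanning_s7 𝕜 (A t) (A' t))
    (hF : ∀ t, IsFundamentalEndomorphism_s7 (A t) (A' t) (F t : Module.End 𝕜 V)) (t : 𝕜) :
    F t * F t = 0 :=
  ContinuousLinearMap.coe_injective ((hF t).mul_self_s7 (hfan t))

theorem deriv_fundamentalEndomorphism_mul_self
    (hA : ∀ i t, HasDerivAt (fun u => A u i) (A' t i) t) (hfan : ∀ t, IsFanning_s7 𝕜 (A t) (A' t))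
    (hF : ∀ t, IsFundamentalEndomorphism_s7 (A t) (A' t) (F t : Module.End 𝕜 V))
    (hF' : ∀ t, HasDerivAt F (F' t) t) (t : 𝕜) : F' t * F' t = 1 := by
  have hsq := fundamentalEndomorphism_mul_self hfan hF
  have hneg : ∀ {v}, F t v = 0 → F' t v = -v :=
    deriv_fundamentalEndomorphism_apply_of_apply_eq_zero hA hfan hF hF'
  ext v
  have hanti : F' t (F t v) + F t (F' t v) = 0 :=
    DFunLike.congr_fun (anticommutator_deriv_eq_zero_of_mul_self_eq_const hF' hsq t) v
  have hrange : F' t (F t v) = -F t v := hneg (DFunLike.congr_fun (hsq t) v)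
  have hker : F t (F' t v - v) = 0 := by
    rw [map_sub, ← hanti, hrange]
    abel
  have hrefl : F' t (F' t v) - F' t v = v - F' t v := by
    rw [← map_sub, hneg hker, neg_sub]
  exact sub_left_injective hrefl

theorem fundamentalEndomorphism_reparam {s s' : 𝕜 → 𝕜} {G : 𝕜 → V →L[𝕜] V}
    (hfan : ∀ t, IsFanning_s7 𝕜 (A t) (A' t))
    (hF : ∀ t, IsFundamentalEndomorphism_s7 (A t) (A' t) (F t : Module.End 𝕜 V))
    (hne : ∀ t, s' t ≠ 0)
    (hG : ∀ t, IsFundamentalEndomorphism_s7 (A (s t)) (s' t • A' (s t)) (G t : Module.End 𝕜 V)) :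
    G = fun t => (s' t)⁻¹ • F (s t) :=
  funext fun t => ContinuousLinearMap.coe_injective <|
    (hG t).unique ((hfan (s t)).smul_velocity (hne t)) ((hF (s t)).smul_velocity (hne t))

theorem prop2_14_part2_general [NeZero (2 : 𝕜)]
    (ω : V →ₗ[𝕜] V →ₗ[𝕜] 𝕜)
    (hA : ∀ i t, HasDerivAt (fun u => A u i) (A' t i) t)
    (hfan : ∀ t, IsFanning_s7 𝕜 (A t) (A' t))
    (hLag : ∀ t i j, ω (A t i) (A t j) = 0)
    {F'' : 𝕜 → V →L[𝕜] V}
    (hF : ∀ t, IsFundamentalEndomorphism_s7 (A t) (A' t) (F t : Module.End 𝕜 V))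
    (hF' : ∀ t, HasDerivAt F (F' t) t) (hF'' : ∀ t, HasDerivAt F' (F'' t) t)
    {s s' s'' r r' : 𝕜 → 𝕜}
    (hs' : ∀ t, HasDerivAt s (s' t) t) (hs'' : ∀ t, HasDerivAt s' (s'' t) t)
    (hne : ∀ t, s' t ≠ 0) (hr : ∀ t, r t = s'' t / s' t) (hr' : ∀ t, HasDerivAt r (r' t) t)
    {G G' G'' : 𝕜 → V →L[𝕜] V}
    (hG : ∀ t, IsFundamentalEndomorphism_s7 (A (s t)) (s' t • A' (s t)) (G t : Module.End 𝕜 V))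
    (hG' : ∀ t, HasDerivAt G (G' t) t) (hG'' : ∀ t, HasDerivAt G' (G'' t) t) :
    (∀ i t, HasDerivAt (fun u => A (s u) i) (s' t • A' (s t) i) t) ∧
    (∀ t, IsFanning_s7 𝕜 (A (s t)) (s' t • A' (s t))) ∧
    (∀ t i j, ω (A (s t) i) (A (s t) j) = 0) ∧
    (∀ t i j, ω (A (s t) i) (s' t • A' (s t) j) = s' t * ω (A (s t) i) (A' (s t) j)) ∧
    (∀ t (v : V), (1 / 4 : 𝕜) • G'' t (G'' t v) =
      s' t ^ 2 • ((1 / 4 : 𝕜) • F'' (s t) (F'' (s t) v)) +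
        ((1 / 2 : 𝕜) * (r' t - (1 / 2 : 𝕜) * r t ^ 2)) • v) := by
  refine ⟨fun i t => (hA i (s t)).scomp t (hs' t), fun t => (hfan (s t)).smul_velocity (hne t),
    fun t => hLag (s t), fun t i j => map_smul (ω (A (s t) i)) (s' t) (A' (s t) j), fun t v => ?_⟩
  have hlog : ∀ t, HasDerivAt s' (r t * s' t) t := fun t => by
    simpa only [hr, div_mul_cancel₀ _ (hne t)] using hs'' t
  have hsq : G'' t (G'' t v) =
      s' t ^ 2 • F'' (s t) (F'' (s t) v) + (2 * r' t - r t ^ 2) • v :=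
    DFunLike.congr_fun (second_deriv_inv_smul_comp_mul_self hF' hF''
      (fundamentalEndomorphism_mul_self hfan hF)
      (deriv_fundamentalEndomorphism_mul_self hA hfan hF hF') hs' hlog hne hr'
      (fundamentalEndomorphism_reparam hfan hF hne hG ▸ hG') hG'' t) v
  have hcoeff : (1 / 4 : 𝕜) * (2 * r' t - r t ^ 2) = 1 / 2 * (r' t - 1 / 2 * r t ^ 2) := by
    rw [show (4 : 𝕜) = 2 * 2 by norm_num]
    field_simp
  rw [hsq, smul_add, smul_comm, smul_smul _ _ v, hcoeff]

end FanningFrame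

/-- **Proposition 2.14(2).**  Let `ω` be a symplectic bilinear form on `V`, `A` a
Lagrangian fanning frame, and `s : ℝ → ℝ` smooth with `ṡ(t) ≠ 0`.  The reparametrized
frame `b_i(t) = a_i(s(t))` (whose derivative frame is `ṡ(t)·ȧ_i(s(t))`) is a Lagrangian
fanning frame, its Wronskian matrix is `ṡ(t)·W_A(s(t))`, and its Jacobi endomorphism is
`K_B(t) = ṡ(t)²·K_A(s(t)) + (1/2){s(t),t}·id`, where `{s,t} = (d/dt)(s̈/ṡ) − (1/2)(s̈/ṡ)²`
is the Schwarzian derivative of `s` (here `r = s̈/ṡ` and `r'` its derivative). -/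
theorem prop2_14_part2
    {V : Type*} [NormedAddCommGroup V] [NormedSpace ℝ V] [FiniteDimensional ℝ V]
    {n : ℕ} (hn : 0 < n) (hdim : Module.finrank ℝ V = 2 * n)
    (ω : V →ₗ[ℝ] V →ₗ[ℝ] ℝ)
    (halt : ∀ v, ω v v = 0)
    (hnd : ∀ v, (∀ w, ω v w = 0) → v = 0)
    (A A' : ℝ → Fin n → V)
    (hA : ∀ i, ContDiff ℝ (⊤ : ℕ∞) (fun t => A t i))
    (hA' : ∀ i t, HasDerivAt (fun u => A u i) (A' t i) t)
    (hfan : ∀ t, LinearIndependent ℝ (Sum.elim (A t) (A' t)) ∧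
      Submodule.span ℝ (Set.range (Sum.elim (A t) (A' t))) = ⊤)
    (hLag : ∀ t i j, ω (A t i) (A t j) = 0)
    (F F' F'' : ℝ → V →L[ℝ] V)
    (hF0 : ∀ t i, F t (A t i) = 0)
    (hF1 : ∀ t i, F t (A' t i) = A t i)
    (hFd : ∀ t, HasDerivAt F (F' t) t)
    (hFd' : ∀ t, HasDerivAt F' (F'' t) t)
    (s s' s'' : ℝ → ℝ)
    (hs : ContDiff ℝ (⊤ : ℕ∞) s)
    (hs' : ∀ t, HasDerivAt s (s' t) t)
    (hs'' : ∀ t, HasDerivAt s' (s'' t) t)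
    (hsne : ∀ t, s' t ≠ 0)
    (r r' : ℝ → ℝ)
    (hr : ∀ t, r t = s'' t / s' t)
    (hrd : ∀ t, HasDerivAt r (r' t) t)
    (FB FB' FB'' : ℝ → V →L[ℝ] V)
    (hFB0 : ∀ t i, FB t (A (s t) i) = 0)
    (hFB1 : ∀ t i, FB t (s' t • A' (s t) i) = A (s t) i)
    (hFBd : ∀ t, HasDerivAt FB (FB' t) t)
    (hFBd' : ∀ t, HasDerivAt FB' (FB'' t) t) :
    -- `B` is a fanning frame with derivative frame `ṡ(t)·A'(s(t))`
    (∀ i t, HasDerivAt (fun u => A (s u) i) (s' t • A' (s t) i) t) ∧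
    (∀ t, LinearIndependent ℝ
        (Sum.elim (fun i => A (s t) i) (fun i => s' t • A' (s t) i)) ∧
      Submodule.span ℝ (Set.range
        (Sum.elim (fun i => A (s t) i) (fun i => s' t • A' (s t) i))) = ⊤) ∧
    -- `B` is Lagrangian and `W_B(t) = ṡ(t)·W_A(s(t))`
    (∀ t i j, ω (A (s t) i) (A (s t) j) = 0) ∧
    (∀ t i j, ω (A (s t) i) (s' t • A' (s t) j) = s' t * ω (A (s t) i) (A' (s t) j)) ∧
    -- `K_B(t) = ṡ(t)² K_A(s(t)) + (1/2){s(t),t}·id`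
    (∀ t (v : V), (1/4 : ℝ) • FB'' t (FB'' t v) =
      (s' t)^2 • ((1/4 : ℝ) • F'' (s t) (F'' (s t) v)) +
        ((1/2 : ℝ) * (r' t - (1/2 : ℝ) * (r t)^2)) • v) := by
  exact prop2_14_part2_general ω hA' hfan hLag (fun t => ⟨hF0 t, hF1 t⟩) hFd hFd' hs' hs'' hsne
    hr hrd (fun t => ⟨hFB0 t, hFB1 t⟩) hFBd hFBd'
end

section
/- Lemma 6.2 (the unit co-sphere of a Randers-type deformation is a translate): Let E be a finite-dimensional real vector space and F₀ : E → ℝ a continuous function with F₀(v) > 0 for all v ≠ 0 and F₀(λv) = λF₀(v) for all λ ≥ 0 and v ∈ E. For a linear functional ξ on E define the dual F₀*(ξ) = sup{ξ(v) : v ∈ E, F₀(v) = 1}. Let θ be a linear functional on E such that F := F₀ + θ also satisfies F(v) > 0 for all v ≠ 0, and define F*(ξ) = sup{ξ(v) : F(v) = 1}. Then the unit co-spheres satisfy {ξ : F*(ξ) = 1} = {θ + η : F₀*(η) = 1}; equivalently, for every linear functional ξ on E, F*(ξ) = 1 if and only if F₀*(ξ − θ) = 1. -/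
/-!
Scaling to `G v = 1` shows that `G*(ξ) = 1` holds exactly when the defect `G - ξ` is nonnegative
where `G > 0` and takes values there that are arbitrarily small relative to `G`. Passing from
`(F₀, ξ - θ)` to `(F₀ + θ, ξ)` leaves the defect unchanged, and being small relative to `F₀` means
the same as being small relative to `F₀ + θ` as soon as each of the two functions dominates a
positive multiple of the other. In finite dimension this comparability follows from compactness of
the sphere.
-/

section PosHomogeneous

variable {E : Type*}

/-- Positive 1-homogeneity of a real function. It is encoded with factors `c > 0`, which already
forces the value `0` at the origin. -/
def PosHomogeneous [SMul ℝ E] (p : E → ℝ) : Prop :=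
  ∀ c : ℝ, 0 < c → ∀ v, p (c • v) = c * p v

namespace PosHomogeneous

theorem add [SMul ℝ E] {p q : E → ℝ} (hp : PosHomogeneous p) (hq : PosHomogeneous q) :
    PosHomogeneous fun v ↦ p v + q v := fun c hc v ↦ by
  simp only [hp c hc, hq c hc, mul_add]

theorem const_mul [SMul ℝ E] {p : E → ℝ} (hp : PosHomogeneous p) (a : ℝ) :
    PosHomogeneous fun v ↦ a * p v := fun c hc v ↦ by
  simp only [hp c hc, mul_left_comm]

theorem map_zero [Zero E] [SMulZeroClass ℝ E] {p : E → ℝ} (hp : PosHomogeneous p) : p 0 = 0 := by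
  have h := hp 2 two_pos 0
  rw [smul_zero] at h
  linarith

theorem map_inv_smul_self [SMul ℝ E] {p : E → ℝ} (hp : PosHomogeneous p) {v : E} (hv : 0 < p v) :
    p ((p v)⁻¹ • v) = 1 := by
  rw [hp _ (inv_pos.2 hv), inv_mul_cancel₀ hv.ne']

theorem le_of_forall_mem_sphere [NormedAddCommGroup E] [NormedSpace ℝ E] {p q : E → ℝ}
    (hp : PosHomogeneous p) (hq : PosHomogeneous q)
    (h : ∀ u ∈ Metric.sphere (0 : E) 1, p u ≤ q u) (v : E) : p v ≤ q v := by
  obtain rfl | hv := eq_or_ne v 0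
  · rw [hp.map_zero, hq.map_zero]
  · have hu := h (‖v‖⁻¹ • v) (by simp [norm_smul, hv])
    have hnorm : 0 < ‖v‖⁻¹ := inv_pos.2 (norm_pos_iff.2 hv)
    rwa [hp _ hnorm, hq _ hnorm, mul_le_mul_iff_right₀ hnorm] at hu

end PosHomogeneous

theorem posHomogeneous_linearMap [AddCommMonoid E] [Module ℝ E] (ξ : E →ₗ[ℝ] ℝ) :
    PosHomogeneous ξ := fun c _ v ↦ by
  rw [map_smul, smul_eq_mul]

end PosHomogeneous

section Comparability

theorem exists_pos_mul_le_of_isCompact {X : Type*} [TopologicalSpace X] {K : Set X}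
    (hK : IsCompact K) {f g : X → ℝ} (hf : UpperSemicontinuousOn f K)
    (hg : LowerSemicontinuousOn g K) (hpos : ∀ x ∈ K, 0 < g x) :
    ∃ c > 0, ∀ x ∈ K, c * f x ≤ g x := by
  obtain rfl | hne := K.eq_empty_or_nonempty
  · exact ⟨1, one_pos, by simp⟩
  obtain ⟨a, haK, hmin⟩ := hg.exists_isMinOn hne hK
  obtain ⟨M, hM⟩ := hf.bddAbove_of_isCompact hK
  have hM' : 0 < max M 1 := lt_max_of_lt_right one_pos
  refine ⟨g a / max M 1, div_pos (hpos a haK) hM', fun x hx ↦ ?_⟩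
  calc g a / max M 1 * f x ≤ g a / max M 1 * max M 1 := by
        have := (hpos a haK).le
        gcongr
        exact le_max_of_le_left (hM (Set.mem_image_of_mem f hx))
    _ = g a := div_mul_cancel₀ _ hM'.ne'
    _ ≤ g x := hmin hx

theorem PosHomogeneous.exists_pos_mul_le {E : Type*} [NormedAddCommGroup E] [NormedSpace ℝ E]
    [ProperSpace E] {p q : E → ℝ} (hp : PosHomogeneous p) (hq : PosHomogeneous q)
    (hpc : UpperSemicontinuous p) (hqc : LowerSemicontinuous q) (hpos : ∀ v, v ≠ 0 → 0 < q v) :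
    ∃ c > 0, ∀ v, c * p v ≤ q v := by
  obtain ⟨c, hc, hle⟩ := exists_pos_mul_le_of_isCompact (isCompact_sphere (0 : E) 1)
    (hpc.upperSemicontinuousOn _) (hqc.lowerSemicontinuousOn _)
    fun u hu ↦ hpos u (ne_zero_of_mem_unit_sphere ⟨u, hu⟩)
  exact ⟨c, hc, (hp.const_mul c).le_of_forall_mem_sphere hq hle⟩

end Comparability

theorem sSup_eq_iff_isLUB_of_ne_zero {s : Set ℝ} {a : ℝ} (ha : a ≠ 0) :
    sSup s = a ↔ IsLUB s a := by
  refine ⟨?_, fun h ↦ ?_⟩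
  · rintro rfl
    have hne : s.Nonempty := by
      by_contra hs
      exact ha (by rw [Set.not_nonempty_iff_eq_empty.1 hs, Real.sSup_empty])
    exact Real.isLUB_sSup hne (not_imp_comm.1 Real.sSup_of_not_bddAbove ha)
  · obtain rfl | hne := s.eq_empty_or_nonempty
    · exact absurd h (by simp)
    · exact h.csSup_eq hne

section DualGauge

variable {E : Type*} [AddCommGroup E] [Module ℝ E]

/-- The dual `G*(ξ) = sup {ξ v | G v = 1}` of a function `G`, evaluated at a linear functional `ξ`.
As a real supremum it is `0` when `ξ` is unbounded above on `{G = 1}` or when that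
set is empty; the value `1` is always a genuine supremum. -/
noncomputable def dualGauge (G : E → ℝ) (ξ : E →ₗ[ℝ] ℝ) : ℝ :=
  sSup (ξ '' {v | G v = 1})

theorem dualGauge_eq_one_iff {p : E → ℝ} (hp : PosHomogeneous p) (ξ : E →ₗ[ℝ] ℝ) :
    dualGauge p ξ = 1 ↔
      (∀ v, 0 < p v → 0 ≤ p v - ξ v) ∧ ∀ ε > 0, ∃ v, 0 < p v ∧ p v - ξ v < ε * p v := by
  rw [dualGauge, sSup_eq_iff_isLUB_of_ne_zero one_ne_zero]
  constructor
  · intro hlub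
    refine ⟨fun v hv ↦ ?_, fun ε hε ↦ ?_⟩
    · have h := hlub.1 ⟨_, hp.map_inv_smul_self hv, rfl⟩
      rw [map_smul, smul_eq_mul, inv_mul_le_one₀ hv] at h
      exact sub_nonneg.2 h
    · obtain ⟨_, ⟨v, hv : p v = 1, rfl⟩, hlt⟩ := (lt_isLUB_iff hlub).1 (sub_lt_self 1 hε)
      exact ⟨v, by rw [hv]; exact one_pos, by rw [hv]; linarith⟩
  · rintro ⟨hnonneg, hsmall⟩
    refine ⟨?_, fun b hb ↦ le_of_not_gt fun hb1 ↦ ?_⟩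
    · rintro _ ⟨v, hv : p v = 1, rfl⟩
      exact hv ▸ sub_nonneg.1 (hnonneg v (hv ▸ one_pos))
    · obtain ⟨v, hv, hlt⟩ := hsmall (1 - b) (sub_pos.2 hb1)
      have h := hb ⟨_, hp.map_inv_smul_self hv, rfl⟩
      rw [map_smul, smul_eq_mul, inv_mul_le_iff₀ hv] at h
      linarith

theorem dualGauge_eq_one_of_sub_eq {p q : E → ℝ} (hp : PosHomogeneous p) (hq : PosHomogeneous q)
    (hpq : ∃ c > 0, ∀ v, c * p v ≤ q v) (hqp : ∃ c > 0, ∀ v, c * q v ≤ p v)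
    {ξ η : E →ₗ[ℝ] ℝ} (hdefect : ∀ v, p v - ξ v = q v - η v) (hξ : dualGauge p ξ = 1) :
    dualGauge q η = 1 := by
  rw [dualGauge_eq_one_iff hp] at hξ
  rw [dualGauge_eq_one_iff hq]
  obtain ⟨hnonneg, hsmall⟩ := hξ
  obtain ⟨c, hc, hcpq⟩ := hpq
  obtain ⟨d, hd, hdqp⟩ := hqp
  refine ⟨fun v hv ↦ ?_, fun ε hε ↦ ?_⟩
  · rw [← hdefect]
    exact hnonneg v ((mul_pos hd hv).trans_le (hdqp v))
  · obtain ⟨v, hv, hlt⟩ := hsmall (ε * c) (mul_pos hε hc)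
    refine ⟨v, (mul_pos hc hv).trans_le (hcpq v), ?_⟩
    calc q v - η v = p v - ξ v := (hdefect v).symm
      _ < ε * c * p v := hlt
      _ = ε * (c * p v) := mul_assoc ..
      _ ≤ ε * q v := by gcongr; exact hcpq v

theorem unit_cosphere_of_randers_deformation_general {F₀ : E → ℝ} (hF₀ : PosHomogeneous F₀)
    (θ : E →ₗ[ℝ] ℝ) (hlower : ∃ c > 0, ∀ v, c * F₀ v ≤ F₀ v + θ v)
    (hupper : ∃ c > 0, ∀ v, c * (F₀ v + θ v) ≤ F₀ v) (ξ : E →ₗ[ℝ] ℝ) :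
    dualGauge (fun v ↦ F₀ v + θ v) ξ = 1 ↔ dualGauge F₀ (ξ - θ) = 1 := by
  have hF : PosHomogeneous fun v ↦ F₀ v + θ v := hF₀.add (posHomogeneous_linearMap θ)
  have hdefect (v : E) : F₀ v + θ v - ξ v = F₀ v - (ξ - θ) v := by
    rw [LinearMap.sub_apply]
    ring
  exact ⟨dualGauge_eq_one_of_sub_eq hF hF₀ hupper hlower hdefect,
    dualGauge_eq_one_of_sub_eq hF₀ hF hlower hupper fun v ↦ (hdefect v).symm⟩

end DualGauge


/-- **Lemma 6.2.**  Let `E` be a finite-dimensional real vector space, `F₀ : E → ℝ`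
continuous, positive on nonzero vectors and positively 1-homogeneous, and `θ` a linear
functional such that `F = F₀ + θ` is also positive on nonzero vectors.  With duals
defined by `G*(ξ) = sup {ξ(v) : G(v) = 1}`, the unit co-spheres satisfy
`{ξ : F*(ξ) = 1} = θ + {η : F₀*(η) = 1}`; equivalently, for every linear functional `ξ`,
`F*(ξ) = 1 ↔ F₀*(ξ − θ) = 1`. -/
theorem unit_cosphere_of_randers_deformation
    {E : Type*} [NormedAddCommGroup E] [NormedSpace ℝ E] [FiniteDimensional ℝ E]
    (F₀ : E → ℝ)
    (hF₀cont : Continuous F₀)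
    (hF₀pos : ∀ v : E, v ≠ 0 → 0 < F₀ v)
    (hF₀hom : ∀ (c : ℝ), 0 ≤ c → ∀ v : E, F₀ (c • v) = c * F₀ v)
    (θ : E →ₗ[ℝ] ℝ)
    (hFpos : ∀ v : E, v ≠ 0 → 0 < F₀ v + θ v) :
    ∀ ξ : E →ₗ[ℝ] ℝ,
      sSup ((fun v => ξ v) '' {v : E | F₀ v + θ v = 1}) = 1 ↔
      sSup ((fun v => ξ v - θ v) '' {v : E | F₀ v = 1}) = 1 := by
  have hF₀ : PosHomogeneous F₀ := fun c hc ↦ hF₀hom c hc.le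
  have hF : PosHomogeneous fun v ↦ F₀ v + θ v := hF₀.add (posHomogeneous_linearMap θ)
  have hFcont : Continuous fun v ↦ F₀ v + θ v := hF₀cont.add θ.continuous_of_finiteDimensional
  exact unit_cosphere_of_randers_deformation_general hF₀ θ
    (hF₀.exists_pos_mul_le hF hF₀cont.upperSemicontinuous hFcont.lowerSemicontinuous hFpos)
    (hF.exists_pos_mul_le hF₀ hFcont.upperSemicontinuous hF₀cont.lowerSemicontinuous hF₀pos)
end

section
/- Fanning is equivalent to nondegeneracy of the Wronskian for Lagrangian curves: Let ω be a symplectic bilinear form on V and A = (a_1, …, a_n) : ℝ → V^n a smooth Lagrangian frame such that a_1(t), …, a_n(t) are linearly independent for each t. Then, for each t, the 2n vectors a_1(t), …, a_n(t), ȧ_1(t), …, ȧ_n(t) form a basis of V (i.e. A is fanning at t) if and only if the Wronskian matrix W(t)_{ij} = ω(a_i(t), ȧ_j(t)) is invertible. -/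
/-!
The `i`-th row of the Wronskian `W` is `aᵢ` tested by `ω` against all the `ȧⱼ`, its `j`-th column is
`ȧⱼ` tested against all the `aᵢ`, and the `aᵢ` do not see each other because the frame is
Lagrangian. If the `aᵢ, ȧⱼ` span, a combination of the `aᵢ` that pairs to zero with every `ȧⱼ` pairs
to zero with everything, hence vanishes: the rows of `W` are independent. Conversely, if the columns
of `W` are independent, the `ȧⱼ` are independent modulo the common kernel of the `ω(aᵢ, ·)`, and
this kernel contains the `aᵢ`: the `aᵢ, ȧⱼ` are independent, and there are `2n` of them.
-/

section Wronskian

open Submodule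

variable {R M N ι κ μ : Type*} [CommRing R] [AddCommGroup M] [Module R M] [AddCommGroup N]
  [Module R N]

/-- The matrix `B (a i) (b j)` of two families of vectors with respect to a bilinear pairing `B`.
The Wronskian at time `t` of a frame `A` with derivative `A'` in a symplectic space `(V, ω)` is
`wronskian ω (A t) (A' t)`. -/
def wronskian (B : M →ₗ[R] N →ₗ[R] R) (a : ι → M) (b : κ → N) : Matrix ι κ R :=
  Matrix.of fun i j => B (a i) (b j)

variable {B : M →ₗ[R] N →ₗ[R] R} {a : ι → M} {a' : μ → N} {b : κ → N}

theorem linearIndependent_wronskian_row_of_span_eq_top (hB : B.SeparatingLeft)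
    (ha : LinearIndependent R a) (horth : ∀ i k, B (a i) (a' k) = 0)
    (hspan : span R (Set.range (Sum.elim a' b)) = ⊤) :
    LinearIndependent R (wronskian B a b).row := by
  let pairWithB : M →ₗ[R] κ → R := LinearMap.pi fun j => B.flip (b j)
  have hdisj : Disjoint (span R (Set.range a)) (LinearMap.ker pairWithB) := by
    refine disjoint_def.2 fun x hx_span hx_ker => ?_
    have hx_a' (k : μ) : B x (a' k) = 0 := by
      have hle : span R (Set.range a) ≤ LinearMap.ker (B.flip (a' k)) :=
        span_le.2 (Set.range_subset_iff.2 fun i => horth i k)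
      exact hle hx_span
    have hx_b (j : κ) : B x (b j) = 0 := congrFun hx_ker j
    have hx_radical : B x = 0 := LinearMap.ext_on_range hspan (Sum.forall.2 ⟨hx_a', hx_b⟩)
    exact hB x (LinearMap.congr_fun hx_radical)
  have hrow : LinearIndependent R (pairWithB ∘ a) := ha.map hdisj
  exact hrow

theorem linearIndependent_sumElim_of_linearIndependent_wronskian_col
    (ha' : LinearIndependent R a') (horth : ∀ i k, B (a i) (a' k) = 0)
    (hW : LinearIndependent R (wronskian B a b).col) :
    LinearIndependent R (Sum.elim a' b) := by
  let pairWithA : N →ₗ[R] ι → R := LinearMap.pi fun i => B (a i)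
  have ha'_ker : span R (Set.range a') ≤ LinearMap.ker pairWithA :=
    span_le.2 (Set.range_subset_iff.2 fun k => funext fun i => horth i k)
  have hb_image : LinearIndependent R (pairWithA ∘ b) := hW
  have hb_ker : Disjoint (span R (Set.range b)) (LinearMap.ker pairWithA) :=
    range_ker_disjoint hb_image
  exact ha'.sum_type (.of_comp pairWithA hb_image) (hb_ker.symm.mono_left ha'_ker)

end Wronskian

theorem fanning_iff_wronskian_invertible_general {K V ι : Type*} [Field K] [AddCommGroup V]
    [Module K V] [FiniteDimensional K V] [Fintype ι] [DecidableEq ι]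
    (hdim : Module.finrank K V = 2 * Fintype.card ι) {B : V →ₗ[K] V →ₗ[K] K}
    (hB : B.SeparatingLeft) {a : ι → V} (ha : LinearIndependent K a)
    (hiso : ∀ i j, B (a i) (a j) = 0) (b : ι → V) :
    (LinearIndependent K (Sum.elim a b) ∧
        Submodule.span K (Set.range (Sum.elim a b)) = ⊤) ↔
      IsUnit (wronskian B a b) := by
  constructor
  · rintro ⟨-, hspan⟩
    exact Matrix.linearIndependent_rows_iff_isUnit.1
      (linearIndependent_wronskian_row_of_span_eq_top hB ha hiso hspan)
  · intro hW
    have hli : LinearIndependent K (Sum.elim a b) :=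
      linearIndependent_sumElim_of_linearIndependent_wronskian_col ha hiso
        (Matrix.linearIndependent_cols_iff_isUnit.2 hW)
    have hcard : Fintype.card (ι ⊕ ι) = Module.finrank K V := by
      rw [hdim, Fintype.card_sum, two_mul]
    exact ⟨hli, hli.span_eq_top_of_card_eq_finrank' hcard⟩

/-- **Fanning ⇔ nondegenerate Wronskian for Lagrangian curves.**  Let `ω` be a symplectic
bilinear form on the `2n`-dimensional space `V` and `A` a smooth Lagrangian frame with
`a_1(t), …, a_n(t)` linearly independent for each `t`.  Then `A` is fanning at `t`
(i.e. `a_1(t), …, a_n(t), ȧ_1(t), …, ȧ_n(t)` form a basis of `V`) if and only if the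
Wronskian matrix `W(t)_{ij} = ω(a_i(t), ȧ_j(t))` is invertible. -/
theorem fanning_iff_wronskian_invertible
    {V : Type*} [NormedAddCommGroup V] [NormedSpace ℝ V] [FiniteDimensional ℝ V]
    {n : ℕ} (hn : 0 < n) (hdim : Module.finrank ℝ V = 2 * n)
    (ω : V →ₗ[ℝ] V →ₗ[ℝ] ℝ)
    (halt : ∀ v, ω v v = 0)
    (hnd : ∀ v, (∀ w, ω v w = 0) → v = 0)
    (A A' : ℝ → Fin n → V)
    (hA : ∀ i, ContDiff ℝ (⊤ : ℕ∞) (fun t => A t i))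
    (hA' : ∀ i t, HasDerivAt (fun s => A s i) (A' t i) t)
    (hind : ∀ t, LinearIndependent ℝ (A t))
    (hLag : ∀ t i j, ω (A t i) (A t j) = 0) :
    ∀ t, (LinearIndependent ℝ (Sum.elim (A t) (A' t)) ∧
        Submodule.span ℝ (Set.range (Sum.elim (A t) (A' t))) = ⊤) ↔
      IsUnit (Matrix.of fun i j => ω (A t i) (A' t j)) := fun t =>
  fanning_iff_wronskian_invertible_general (by rw [hdim, Fintype.card_fin]) hnd (hind t) (hLag t)
    (A' t)
end

section
/- The symplectic reduction of a fanning Lagrangian curve is fanning, with the same Wronskian: In the reduction setting, the reduced frame Ā = (π∘a_1, …, π∘a_k) : ℝ → (𝕎/𝕎^ω)^k is a fanning frame in the symplectic vector space (𝕎/𝕎^ω, ω_R); that is, for every t the vectors π(a_1(t)), …, π(a_k(t)) together with their derivatives form a basis of 𝕎/𝕎^ω. Moreover its Wronskian matrix equals the corresponding block of the Wronskian of A: ω_R(π(a_i(t)), (d/dt)π(a_j(t))) = ω(a_i(t), ȧ_j(t)) for all i, j ≤ k and all t. -/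
/-!
At each time, write `b_i = ȧ_i`. By isotropy, pairing `a₁, …, a_k, b₁, …, b_k` with the
functionals `ω(·, b_j)` and `ω(a_i, ·)` gives a block triangular matrix whose diagonal blocks are
the transpose of the Wronskian block and the Wronskian block itself, so invertibility of the latter
makes these vectors linearly independent in `𝕎/𝕎^ω`. They number `2k = dim V - 2 dim 𝕎^ω`, which is
the dimension of `𝕎/𝕎^ω`.
-/

theorem linearIndependent_of_isUnit_dual_pairing {R M ι : Type*} [CommRing R] [AddCommGroup M]
    [Module R M] [Fintype ι] [DecidableEq ι] (f : ι → Module.Dual R M) (v : ι → M)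
    (hfv : IsUnit (Matrix.of fun i j => f i (v j))) : LinearIndependent R v :=
  .of_comp (LinearMap.pi f) (Matrix.linearIndependent_cols_of_isUnit hfv)

theorem linearIndependent_sumElim_of_isotropic {R M ι : Type*} [CommRing R] [AddCommGroup M]
    [Module R M] [Fintype ι] [DecidableEq ι] (B : LinearMap.BilinForm R M) (a b : ι → M)
    (ha : ∀ i j, B (a i) (a j) = 0) (hab : IsUnit (Matrix.of fun i j => B (a i) (b j))) :
    LinearIndependent R (Sum.elim a b) := by
  let f : ι ⊕ ι → Module.Dual R M := Sum.elim (fun j => B.flip (b j)) (fun i => B (a i))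
  let G : Matrix ι ι R := .of fun i j => B (a i) (b j)
  have hblock : Matrix.of (fun i j => f i (Sum.elim a b j)) =
      Matrix.fromBlocks G.transpose (.of fun i j => B (b j) (b i)) 0 G := by
    ext (i | i) (j | j) <;> simp [f, G, ha]
  refine linearIndependent_of_isUnit_dual_pairing f _ ?_
  rw [hblock, Matrix.isUnit_fromBlocks_zero₂₁, Matrix.isUnit_transpose]
  exact ⟨hab, hab⟩

section Reduction

variable {K V : Type*} [Field K] [AddCommGroup V] [Module K V]
  (ω : LinearMap.BilinForm K V) (W : Submodule K V)

/-- The reduced space `𝕎/𝕎^ω` of a subspace `𝕎`, where `𝕎^ω` is the left orthogonal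
`{u | ∀ w ∈ 𝕎, ω u w = 0}`; the `flip` is there because `LinearMap.BilinForm.orthogonal` is the
right orthogonal. -/
abbrev ReducedSpace : Type _ :=
  W ⧸ (ω.flip.orthogonal W).submoduleOf W

variable {ω W} [FiniteDimensional K V]

theorem finrank_reducedSpace_add_two_mul (hω : ω.Nondegenerate) (hW : ω.flip.orthogonal W ≤ W) :
    Module.finrank K (ReducedSpace ω W) + 2 * Module.finrank K (ω.flip.orthogonal W) =
      Module.finrank K V := by
  have hquot := ((ω.flip.orthogonal W).submoduleOf W).finrank_quotient_add_finrank
  have hsub := (Submodule.submoduleOfEquivOfLe hW).finrank_eq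
  have horth := LinearMap.BilinForm.finrank_orthogonal
    (LinearMap.BilinForm.nondegenerate_flip_iff.mpr hω) W
  have hle := W.finrank_le
  lia

theorem reduced_frame_fanning_same_wronskian_general {ι : Type*} [Fintype ι] [DecidableEq ι]
    (hω : ω.Nondegenerate) (hW : ω.flip.orthogonal W ≤ W)
    (hdim : Module.finrank K V = 2 * (Fintype.card ι + Module.finrank K (ω.flip.orthogonal W)))
    (a b : ι → W) (ha : ∀ i j, ω (a i) (a j) = 0)
    (hab : IsUnit (Matrix.of fun i j => ω (a i) (b j)))
    (ωR : LinearMap.BilinForm K (ReducedSpace ω W))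
    (hωR : ∀ u v : W, ωR (Submodule.Quotient.mk u) (Submodule.Quotient.mk v) = ω u v) :
    let π : W → ReducedSpace ω W := Submodule.Quotient.mk
    (LinearIndependent K (Sum.elim (π ∘ a) (π ∘ b)) ∧
      Submodule.span K (Set.range (Sum.elim (π ∘ a) (π ∘ b))) = ⊤) ∧
    ∀ i j, ωR (π (a i)) (π (b j)) = ω (a i) (b j) := by
  intro π
  have hli : LinearIndependent K (Sum.elim (π ∘ a) (π ∘ b)) :=
    linearIndependent_sumElim_of_isotropic ωR _ _ (fun i j => (hωR _ _).trans (ha i j))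
      (by simpa only [π, Function.comp_apply, hωR] using hab)
  have hrank : Fintype.card (ι ⊕ ι) = Module.finrank K (ReducedSpace ω W) := by
    have hred := finrank_reducedSpace_add_two_mul hω hW
    rw [Fintype.card_sum]
    lia
  exact ⟨⟨hli, hli.span_eq_top_of_card_eq_finrank' hrank⟩, fun i j => hωR _ _⟩

end Reduction

theorem sympOrtho_eq_orthogonal_flip {V : Type*} [AddCommGroup V] [Module ℝ V]
    (ω : V →ₗ[ℝ] V →ₗ[ℝ] ℝ) (S : Submodule ℝ V) :
    sympOrtho ω S = (LinearMap.BilinForm.flip ω).orthogonal S :=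
  rfl

/-- **The symplectic reduction of a fanning Lagrangian curve is fanning, with the same
Wronskian.**  In the reduction setting (a Lagrangian fanning frame `A` adapted to a
coisotropic subspace `𝕎`, with `a_1, …, a_k` spanning `ℓ(t) ∩ 𝕎`, the Wronskian
block-diagonal and its upper `k×k` block invertible, `k = n − dim 𝕎^ω`), the reduced
frame `Ā = (π∘a_1, …, π∘a_k)` is a fanning frame in `(𝕎/𝕎^ω, ω_R)` — i.e. the vectors
`π(a_i(t))` together with their derivatives `π(ȧ_i(t))` form a basis of `𝕎/𝕎^ω` —
and `ω_R(π(a_i(t)), π(ȧ_j(t))) = ω(a_i(t), ȧ_j(t))` for all `i, j ≤ k`. -/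
theorem reduced_frame_fanning_same_wronskian
    {V : Type*} [NormedAddCommGroup V] [NormedSpace ℝ V] [FiniteDimensional ℝ V]
    {n : ℕ} (hn : 0 < n) (hdim : Module.finrank ℝ V = 2 * n)
    (ω : V →ₗ[ℝ] V →ₗ[ℝ] ℝ)
    (halt : ∀ v, ω v v = 0)
    (hnd : ∀ v, (∀ w, ω v w = 0) → v = 0)
    (A A' : ℝ → Fin n → V)
    (hA : ∀ i, ContDiff ℝ (⊤ : ℕ∞) (fun t => A t i))
    (hA' : ∀ i t, HasDerivAt (fun s => A s i) (A' t i) t)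
    (hfan : ∀ t, LinearIndependent ℝ (Sum.elim (A t) (A' t)) ∧
      Submodule.span ℝ (Set.range (Sum.elim (A t) (A' t))) = ⊤)
    (hLag : ∀ t i j, ω (A t i) (A t j) = 0)
    (Wsub : Submodule ℝ V)
    (hco : sympOrtho ω Wsub ≤ Wsub)
    (k : ℕ) (hkn : k ≤ n)
    (hk : k + Module.finrank ℝ (sympOrtho ω Wsub) = n)
    (hmem : ∀ t (i : Fin n), (i : ℕ) < k → A t i ∈ Wsub)
    (hmem' : ∀ t (i : Fin n), (i : ℕ) < k → A' t i ∈ Wsub)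
    (hspan : ∀ t, Submodule.span ℝ {v | ∃ i : Fin n, (i : ℕ) < k ∧ v = A t i} =
      Submodule.span ℝ (Set.range (A t)) ⊓ Wsub)
    (hblock : ∀ t (i j : Fin n), (i : ℕ) < k → k ≤ (j : ℕ) → ω (A t i) (A' t j) = 0)
    (hWkinv : ∀ t, IsUnit (Matrix.of fun i j : Fin k =>
      ω (A t (Fin.castLE hkn i)) (A' t (Fin.castLE hkn j))))
    (ωR : (Wsub ⧸ (sympOrtho ω Wsub).comap Wsub.subtype) →ₗ[ℝ]
      (Wsub ⧸ (sympOrtho ω Wsub).comap Wsub.subtype) →ₗ[ℝ] ℝ)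
    (hωR : ∀ u v : Wsub,
      ωR (Submodule.Quotient.mk u) (Submodule.Quotient.mk v) = ω u v) :
    ∀ t,
      (LinearIndependent ℝ (Sum.elim
          (fun i : Fin k => (Submodule.Quotient.mk
            (⟨A t (Fin.castLE hkn i), hmem t (Fin.castLE hkn i) i.isLt⟩ : Wsub) :
            Wsub ⧸ (sympOrtho ω Wsub).comap Wsub.subtype))
          (fun i : Fin k => Submodule.Quotient.mk
            (⟨A' t (Fin.castLE hkn i), hmem' t (Fin.castLE hkn i) i.isLt⟩ : Wsub))) ∧
        Submodule.span ℝ (Set.range (Sum.elim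
          (fun i : Fin k => (Submodule.Quotient.mk
            (⟨A t (Fin.castLE hkn i), hmem t (Fin.castLE hkn i) i.isLt⟩ : Wsub) :
            Wsub ⧸ (sympOrtho ω Wsub).comap Wsub.subtype))
          (fun i : Fin k => Submodule.Quotient.mk
            (⟨A' t (Fin.castLE hkn i), hmem' t (Fin.castLE hkn i) i.isLt⟩ : Wsub)))) = ⊤) ∧
      (∀ i j : Fin k,
        ωR (Submodule.Quotient.mk
            (⟨A t (Fin.castLE hkn i), hmem t (Fin.castLE hkn i) i.isLt⟩ : Wsub))
          (Submodule.Quotient.mk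
            (⟨A' t (Fin.castLE hkn j), hmem' t (Fin.castLE hkn j) j.isLt⟩ : Wsub)) =
        ω (A t (Fin.castLE hkn i)) (A' t (Fin.castLE hkn j))) := by
  intro t
  exact reduced_frame_fanning_same_wronskian_general (.ofSeparatingLeft hnd) hco
    (by rw [hdim, Fintype.card_fin, ← sympOrtho_eq_orthogonal_flip, hk])
    (fun i => ⟨A t (Fin.castLE hkn i), _⟩) (fun i => ⟨A' t (Fin.castLE hkn i), _⟩)
    (fun _ _ => hLag t _ _) (hWkinv t) ωR hωR
end

section
/- Existence and uniqueness of normal frames: Let A be a fanning frame in V, let τ ∈ ℝ, and let (v_1, …, v_n) be any basis of ℓ(τ). Then there exists a unique smooth frame B = (b_1, …, b_n) : ℝ → V^n such that: b_i(t) ∈ ℓ(t) for all t and i; b_1(t), …, b_n(t) are linearly independent for each t; b_i(τ) = v_i for all i; and B is normal, meaning b̈_j(t) ∈ ℓ(t) for all t and j (equivalently, the matrix P in the relation B̈ + ḂP + BQ = 0 vanishes identically). Moreover this B is fanning. -/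
/-!
Write a section of `ℓ` as `b = A x`. Since `b̈ ≡ 2 Ȧ ẋ + Ä x` modulo `ℓ`, and `Ȧ` is an isomorphism
onto `V / ℓ`, the condition `b̈ ∈ ℓ` is a linear differential equation `ẋ = M x`. Hence, on the
vector space of sections with `b̈ ∈ ℓ`, evaluation at any time `t` is an isomorphism onto `ℓ(t)`;
and because `ḃ ≡ Ȧ x` modulo `ℓ`, the map `b ↦ ḃ(t) mod ℓ(t)` is injective too. Linear independence
of the `v_i` therefore passes to the `b_i(t)` and to the `ḃ_i(t)` modulo `ℓ(t)`.
-/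

open Set Real
open scoped ContDiff BoundedContinuousFunction

section LinearODE

/-- Bielecki's weight for a linear equation whose coefficient has norm `m`, based at time `τ`:
Picard iteration contracts the supremum norm weighted by its inverse. Taking `cosh` instead of the
usual exponential of `2 |∫ m|` avoids a case distinction between `t ≤ τ` and `τ ≤ t`. -/
noncomputable def bieleckiWeight (m : ℝ → ℝ) (τ t : ℝ) : ℝ :=
  cosh (2 * ∫ s in τ..t, m s)

theorem one_le_bieleckiWeight (m : ℝ → ℝ) (τ t : ℝ) : 1 ≤ bieleckiWeight m τ t :=
  one_le_cosh _

theorem bieleckiWeight_pos (m : ℝ → ℝ) (τ t : ℝ) : 0 < bieleckiWeight m τ t :=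
  cosh_pos _

theorem continuous_bieleckiWeight {m : ℝ → ℝ} (hm : Continuous m) (τ : ℝ) :
    Continuous (bieleckiWeight m τ) :=
  continuous_cosh.comp <| continuous_const.mul <|
    intervalIntegral.continuous_primitive (fun _ _ ↦ hm.intervalIntegrable _ _) τ

theorem abs_integral_mul_bieleckiWeight_le {m : ℝ → ℝ} (hm : Continuous m) (τ t : ℝ) :
    |∫ s in τ..t, m s * bieleckiWeight m τ s| ≤ bieleckiWeight m τ t / 2 := by
  set u : ℝ → ℝ := fun t ↦ ∫ s in τ..t, m s
  have hu (s : ℝ) : HasDerivAt (fun s ↦ sinh (2 * u s) / 2) (m s * cosh (2 * u s)) s := by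
    have := ((hm.integral_hasStrictDerivAt τ s).hasDerivAt.const_mul 2).sinh.div_const 2
    exact this.congr_deriv (by ring)
  have hint : ∫ s in τ..t, m s * cosh (2 * u s) = sinh (2 * u t) / 2 := by
    rw [intervalIntegral.integral_eq_sub_of_hasDerivAt (fun s _ ↦ hu s)
      ((hm.mul (continuous_bieleckiWeight hm τ)).intervalIntegrable _ _)]
    simp [u]
  have hsinh : |sinh (2 * u t)| ≤ cosh (2 * u t) := by
    rw [← cosh_abs, abs_sinh]; exact (sinh_lt_cosh _).le
  calc |∫ s in τ..t, m s * cosh (2 * u s)| = |sinh (2 * u t)| / 2 := by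
        rw [hint, abs_div, abs_two]
    _ ≤ cosh (2 * u t) / 2 := by gcongr

variable {E : Type*} [NormedAddCommGroup E] [NormedSpace ℝ E] {M : ℝ → E →L[ℝ] E}

theorem norm_integral_clm_apply_le_bieleckiWeight (hM : Continuous M) (τ t : ℝ) {x : ℝ → E} {c : ℝ}
    (hx : ∀ s, ‖x s‖ ≤ c * bieleckiWeight (‖M ·‖) τ s) :
    ‖∫ s in τ..t, M s (x s)‖ ≤ c / 2 * bieleckiWeight (‖M ·‖) τ t := by
  have hc : 0 ≤ c :=
    nonneg_of_mul_nonneg_left ((norm_nonneg _).trans (hx τ)) (bieleckiWeight_pos _ τ τ)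
  have hbound (s : ℝ) : ‖M s (x s)‖ ≤ c * (‖M s‖ * bieleckiWeight (‖M ·‖) τ s) := by
    calc ‖M s (x s)‖ ≤ ‖M s‖ * (c * bieleckiWeight (‖M ·‖) τ s) := (M s).le_opNorm_of_le (hx s)
      _ = c * (‖M s‖ * bieleckiWeight (‖M ·‖) τ s) := by ring
  have hcont : Continuous fun s ↦ c * (‖M s‖ * bieleckiWeight (‖M ·‖) τ s) :=
    continuous_const.mul (hM.norm.mul (continuous_bieleckiWeight hM.norm τ))
  calc ‖∫ s in τ..t, M s (x s)‖
      ≤ |∫ s in τ..t, c * (‖M s‖ * bieleckiWeight (‖M ·‖) τ s)| :=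
        intervalIntegral.norm_integral_le_abs_of_norm_le (.of_forall hbound)
          (hcont.intervalIntegrable _ _)
    _ = c * |∫ s in τ..t, ‖M s‖ * bieleckiWeight (‖M ·‖) τ s| := by
        rw [intervalIntegral.integral_const_mul, abs_mul, abs_of_nonneg hc]
    _ ≤ c * (bieleckiWeight (‖M ·‖) τ t / 2) := by
        gcongr; exact abs_integral_mul_bieleckiWeight_le hM.norm τ t
    _ = c / 2 * bieleckiWeight (‖M ·‖) τ t := by ring

theorem norm_bieleckiWeight_smul_le (m : ℝ → ℝ) (τ : ℝ) (y : ℝ →ᵇ E) (s : ℝ) :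
    ‖bieleckiWeight m τ s • y s‖ ≤ ‖y‖ * bieleckiWeight m τ s := by
  rw [norm_smul, norm_of_nonneg (bieleckiWeight_pos m τ s).le, mul_comm]
  exact mul_le_mul_of_nonneg_right (y.norm_coe_le_norm s) (bieleckiWeight_pos m τ s).le

/-- Picard iteration for `ẋ = M x`, `x(τ) = x₀`, acting on the bounded function `y = x / w` instead
of `x`, where `w` is Bielecki's weight. -/
noncomputable def weightedPicard (hM : Continuous M) (τ : ℝ) (x₀ : E) (y : ℝ →ᵇ E) :
    ℝ →ᵇ E :=
  .ofNormedAddCommGroup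
    (fun t ↦ (bieleckiWeight (‖M ·‖) τ t)⁻¹ •
      ODE.picard (fun t ↦ M t) τ x₀ (fun s ↦ bieleckiWeight (‖M ·‖) τ s • y s) t)
    (by
      have hW := continuous_bieleckiWeight hM.norm τ
      have hint := intervalIntegral.continuous_primitive (μ := MeasureTheory.volume)
        (fun _ _ ↦ (hM.clm_apply (hW.smul y.continuous)).intervalIntegrable _ _) τ
      exact (hW.inv₀ fun t ↦ (bieleckiWeight_pos _ τ t).ne').smul (continuous_const.add hint))
    (‖x₀‖ + ‖y‖ / 2)
    (fun t ↦ by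
      have hW := bieleckiWeight_pos (‖M ·‖) τ t
      rw [norm_smul, norm_inv, norm_of_nonneg hW.le, inv_mul_le_iff₀' hW, ODE.picard_apply, add_mul]
      refine (norm_add_le _ _).trans (add_le_add ?_ ?_)
      · exact le_mul_of_one_le_right (norm_nonneg _) (one_le_bieleckiWeight _ τ t)
      · exact norm_integral_clm_apply_le_bieleckiWeight hM τ t (norm_bieleckiWeight_smul_le _ τ y))

theorem contractingWith_weightedPicard (hM : Continuous M) (τ : ℝ) (x₀ : E) :
    ContractingWith (1 / 2) (weightedPicard hM τ x₀) := by
  refine ⟨by norm_num, LipschitzWith.of_dist_le_mul fun y z ↦ ?_⟩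
  rw [BoundedContinuousFunction.dist_le (by positivity)]
  intro t
  have hW := bieleckiWeight_pos (‖M ·‖) τ t
  have hWc := continuous_bieleckiWeight hM.norm τ
  have hint (w : ℝ →ᵇ E) : IntervalIntegrable
      (fun s ↦ M s (bieleckiWeight (‖M ·‖) τ s • w s)) MeasureTheory.volume τ t :=
    (hM.clm_apply (hWc.smul w.continuous)).intervalIntegrable _ _
  have hsub : weightedPicard hM τ x₀ y t - weightedPicard hM τ x₀ z t =
      (bieleckiWeight (‖M ·‖) τ t)⁻¹ •
        ∫ s in τ..t, M s (bieleckiWeight (‖M ·‖) τ s • (y - z) s) := by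
    simp only [weightedPicard, BoundedContinuousFunction.coe_ofNormedAddCommGroup,
      ODE.picard_apply, ← smul_sub, add_sub_add_left_eq_sub,
      BoundedContinuousFunction.coe_sub, Pi.sub_apply]
    rw [← intervalIntegral.integral_sub (hint y) (hint z)]
    simp only [← map_sub, ← smul_sub]
  rw [dist_eq_norm, hsub, norm_smul, norm_inv, norm_of_nonneg hW.le, inv_mul_le_iff₀' hW,
    dist_eq_norm]
  refine (norm_integral_clm_apply_le_bieleckiWeight hM τ t
    (norm_bieleckiWeight_smul_le _ τ (y - z))).trans_eq ?_
  push_cast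
  ring

theorem hasDerivAt_picard_clm [CompleteSpace E] (hM : Continuous M) (τ : ℝ) (x₀ : E)
    {x : ℝ → E} (hx : Continuous x) (t : ℝ) :
    HasDerivAt (ODE.picard (fun t ↦ M t) τ x₀ x) (M t (x t)) t :=
  ((hM.clm_apply hx).integral_hasStrictDerivAt τ t).hasDerivAt.const_add x₀

theorem exists_isIntegralCurve_clm [CompleteSpace E] (hM : Continuous M) (τ : ℝ) (x₀ : E) :
    ∃ x : ℝ → E, x τ = x₀ ∧ IsIntegralCurve x fun t ↦ M t := by
  have hT := contractingWith_weightedPicard hM τ x₀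
  set y := hT.fixedPoint
  set x : ℝ → E := fun t ↦ bieleckiWeight (‖M ·‖) τ t • y t
  have hx : Continuous x := (continuous_bieleckiWeight hM.norm τ).smul y.continuous
  have hfix : x = ODE.picard (fun t ↦ M t) τ x₀ x := by
    funext t
    have hyt : weightedPicard hM τ x₀ y t = y t := congr($(hT.fixedPoint_isFixedPt) t)
    exact (eq_inv_smul_iff₀ (bieleckiWeight_pos _ τ t).ne').1 hyt.symm
  refine ⟨x, by rw [hfix, ODE.picard_apply₀], fun t ↦ ?_⟩
  have := hasDerivAt_picard_clm hM τ x₀ hx t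
  rwa [← hfix] at this

theorem eq_of_isIntegralCurve_clm {x y : ℝ → E} (hM : Continuous M)
    (hx : IsIntegralCurve x fun t ↦ M t) (hy : IsIntegralCurve y fun t ↦ M t) {τ : ℝ}
    (h : x τ = y τ) : x = y := by
  funext t
  obtain ⟨a, ha⟩ := exists_lt (min τ t)
  obtain ⟨b, hb⟩ := exists_gt (max τ t)
  rw [lt_min_iff] at ha
  rw [max_lt_iff] at hb
  obtain ⟨C, hC⟩ := (isCompact_Icc (a := a) (b := b)).exists_bound_of_continuousOn hM.continuousOn
  have hLip (s) (hs : s ∈ Ioo a b) : LipschitzOnWith C.toNNReal (M s) univ :=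
    ((M s).lipschitz.weaken <| NNReal.le_toNNReal_of_coe_le <| hC s <|
      Ioo_subset_Icc_self hs).lipschitzOnWith
  exact ODE_solution_unique_of_mem_Ioo hLip ⟨ha.1, hb.1⟩ (fun s _ ↦ ⟨hx s, mem_univ _⟩)
    (fun s _ ↦ ⟨hy s, mem_univ _⟩) h ⟨ha.2, hb.2⟩

theorem contDiff_of_isIntegralCurve_clm {n : ℕ} {x : ℝ → E} (hM : ContDiff ℝ n M)
    (hx : IsIntegralCurve x fun t ↦ M t) : ContDiff ℝ (n + 1) x := by
  have bootstrap {k : ℕ} (hM : ContDiff ℝ k M) (hxk : ContDiff ℝ k x) : ContDiff ℝ (k + 1) x :=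
    contDiff_succ_iff_deriv.2 ⟨fun t ↦ (hx t).differentiableAt, by simp,
      (funext fun t ↦ (hx t).deriv : deriv x = fun t ↦ M t (x t)) ▸ hM.clm_apply hxk⟩
  induction n with
  | zero => exact bootstrap hM (contDiff_zero.2 hx.continuous)
  | succ n ih =>
    refine bootstrap hM ?_
    exact_mod_cast ih (hM.of_le (by norm_cast; exact n.le_succ))

end LinearODE

section Fanning

variable {F V : Type*} [NormedAddCommGroup F] [NormedSpace ℝ F] [NormedAddCommGroup V]
  [NormedSpace ℝ V]

/-- The vector space of smooth sections of the curve of subspaces `ℓ` whose second derivative again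
lies in `ℓ`. A frame of `ℓ` is normal when its members belong to this space. -/
def normalSections (ℓ : ℝ → Submodule ℝ V) : Submodule ℝ (ℝ → V) where
  carrier := {b | ContDiff ℝ ∞ b ∧ (∀ t, b t ∈ ℓ t) ∧ ∀ t, deriv (deriv b) t ∈ ℓ t}
  zero_mem' := ⟨contDiff_const, fun t ↦ (ℓ t).zero_mem, fun t ↦ by simp [deriv_zero]⟩
  add_mem' := by
    rintro b c ⟨hb, hbℓ, hb''⟩ ⟨hc, hcℓ, hc''⟩
    refine ⟨hb.add hc, fun t ↦ (ℓ t).add_mem (hbℓ t) (hcℓ t), fun t ↦ ?_⟩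
    have hderiv : deriv (b + c) = deriv b + deriv c := funext fun s ↦
      deriv_add ((contDiff_infty_iff_deriv.1 hb).1 s) ((contDiff_infty_iff_deriv.1 hc).1 s)
    rw [hderiv, deriv_add ((contDiff_infty_iff_deriv.1 (contDiff_infty_iff_deriv.1 hb).2).1 t)
      ((contDiff_infty_iff_deriv.1 (contDiff_infty_iff_deriv.1 hc).2).1 t)]
    exact (ℓ t).add_mem (hb'' t) (hc'' t)
  smul_mem' r b := by
    rintro ⟨hb, hbℓ, hb''⟩
    refine ⟨contDiff_const.smul hb, fun t ↦ (ℓ t).smul_mem r (hbℓ t), fun t ↦ ?_⟩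
    have hderiv : deriv (r • b) = r • deriv b := funext fun s ↦ deriv_const_smul_field r b
    rw [hderiv, deriv_const_smul_field]
    exact (ℓ t).smul_mem r (hb'' t)

/-- The linear map `b ↦ ḃ(t)` on normal sections. -/
noncomputable def velocity (ℓ : ℝ → Submodule ℝ V) (t : ℝ) : normalSections ℓ →ₗ[ℝ] V where
  toFun b := deriv b t
  map_add' b c := deriv_add (b.2.1.differentiable (by simp) t) (c.2.1.differentiable (by simp) t)
  map_smul' r b := deriv_const_smul_field r _

/-- Fanning frames in coordinate-free form: a frame `(a_1, …, a_n)` is encoded as the operator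
`c ↦ ∑ i, c i • a_i` on `F = ℝⁿ`, and `(a_1, …, a_n, ȧ_1, …, ȧ_n)` is a basis exactly when
`(x, y) ↦ A x + Ȧ y` is invertible. -/
structure IsFanning_s19 (A : ℝ → F →L[ℝ] V) : Prop where
  contDiff : ContDiff ℝ ∞ A
  isInvertible (t : ℝ) : ((A t).coprod (deriv A t)).IsInvertible

/-- The coordinates of vectors with respect to `A(t)` and `Ȧ(t)`, that is, the inverse of
`(x, y) ↦ A x + Ȧ y`; it is `0` where that map is not invertible. -/
noncomputable def splitting (A : ℝ → F →L[ℝ] V) (t : ℝ) : V →L[ℝ] F × F :=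
  ((A t).coprod (deriv A t)).inverse

/-- The coefficient of the linear equation satisfied by the coordinates of normal sections; it is
`P / 2` in the relation `Ä + Ȧ P + A Q = 0`. -/
noncomputable def normalGenerator (A : ℝ → F →L[ℝ] V) (t : ℝ) : F →L[ℝ] F :=
  -(1 / 2 : ℝ) • (.snd ℝ F F ∘L splitting A t ∘L deriv (deriv A) t)

namespace IsFanning_s19

variable {A : ℝ → F →L[ℝ] V} {b c : ℝ → V} {x : ℝ → F} {t τ : ℝ}

theorem splitting_apply_add (hA : IsFanning_s19 A) (t : ℝ) (x y : F) :
    splitting A t (A t x + deriv A t y) = (x, y) :=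
  (hA.isInvertible t).inverse_apply_self (x, y)

theorem splitting_apply (hA : IsFanning_s19 A) (t : ℝ) (x : F) :
    splitting A t (A t x) = (x, 0) := by
  simpa using hA.splitting_apply_add t x 0

theorem splitting_deriv_apply (hA : IsFanning_s19 A) (t : ℝ) (y : F) :
    splitting A t (deriv A t y) = (0, y) := by
  simpa using hA.splitting_apply_add t 0 y

theorem mem_range_iff_snd (hA : IsFanning_s19 A) {v : V} :
    v ∈ (A t).range ↔ (splitting A t v).2 = 0 := by
  constructor
  · rintro ⟨x, rfl⟩
    exact congr($(hA.splitting_apply t x).2)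
  · intro hv
    have hsplit : A t (splitting A t v).1 + deriv A t (splitting A t v).2 = v :=
      (hA.isInvertible t).self_apply_inverse v
    exact ⟨(splitting A t v).1, by simpa [hv] using hsplit⟩

theorem contDiff_splitting [CompleteSpace F] (hA : IsFanning_s19 A) : ContDiff ℝ ∞ (splitting A) := by
  have hA' : ContDiff ℝ ∞ (deriv A) := (contDiff_infty_iff_deriv.1 hA.contDiff).2
  have hE : ContDiff ℝ ∞ fun t ↦ (A t).coprod (deriv A t) :=
    (ContinuousLinearMap.coprodEquivL ℝ :
      ((F →L[ℝ] V) × (F →L[ℝ] V)) ≃L[ℝ] (F × F →L[ℝ] V)).contDiff.comp (hA.contDiff.prodMk hA')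
  exact contDiff_iff_contDiffAt.2 fun t ↦
    (hA.isInvertible t).contDiffAt_map_inverse.comp t hE.contDiffAt

theorem contDiff_normalGenerator [CompleteSpace F] (hA : IsFanning_s19 A) :
    ContDiff ℝ ∞ (normalGenerator A) := by
  have hA'' : ContDiff ℝ ∞ (deriv (deriv A)) :=
    (contDiff_infty_iff_deriv.1 (contDiff_infty_iff_deriv.1 hA.contDiff).2).2
  exact (contDiff_const.clm_comp (hA.contDiff_splitting.clm_comp hA'')).const_smul _

theorem deriv_deriv_clm_apply_mem_range_iff (hA : IsFanning_s19 A) (hx : ContDiff ℝ ∞ x) :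
    deriv (deriv fun t ↦ A t (x t)) t ∈ (A t).range ↔ deriv x t = normalGenerator A t (x t) := by
  have hdA := contDiff_infty_iff_deriv.1 hA.contDiff
  have hdA' := contDiff_infty_iff_deriv.1 hdA.2
  have hdx := contDiff_infty_iff_deriv.1 hx
  have hdx' := contDiff_infty_iff_deriv.1 hdx.2
  have hfirst : deriv (fun t ↦ A t (x t)) = fun t ↦ deriv A t (x t) + A t (deriv x t) :=
    funext fun t ↦ deriv_clm_apply (hdA.1 t) (hdx.1 t)
  have hsecond : deriv (deriv fun t ↦ A t (x t)) t =
      A t (deriv (deriv x) t) + (2 : ℝ) • deriv A t (deriv x t) + deriv (deriv A) t (x t) := by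
    rw [hfirst, deriv_fun_add (hdA'.1.clm_apply hdx.1 t) (hdA.1.clm_apply hdx'.1 t),
      deriv_clm_apply (hdA'.1 t) (hdx.1 t), deriv_clm_apply (hdA.1 t) (hdx'.1 t), two_smul]
    abel
  have hsnd : (splitting A t (deriv (deriv fun t ↦ A t (x t)) t)).2 =
      (2 : ℝ) • (deriv x t - normalGenerator A t (x t)) := by
    rw [hsecond]
    simp [hA.splitting_apply, hA.splitting_deriv_apply, normalGenerator, smul_smul]
  rw [hA.mem_range_iff_snd, hsnd, smul_eq_zero_iff_right two_ne_zero, sub_eq_zero]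

theorem mem_normalSections_iff [CompleteSpace F] (hA : IsFanning_s19 A) :
    b ∈ normalSections (fun t ↦ (A t).range) ↔
      ∃ x, IsIntegralCurve x (fun t ↦ normalGenerator A t) ∧ b = fun t ↦ A t (x t) := by
  constructor
  · rintro ⟨hb, hbℓ, hb''⟩
    set x : ℝ → F := fun t ↦ (splitting A t (b t)).1
    have hx : ContDiff ℝ ∞ x := contDiff_fst.comp (hA.contDiff_splitting.clm_apply hb)
    have hbx : b = fun t ↦ A t (x t) := by
      funext t
      obtain ⟨y, hy⟩ := hbℓ t
      simp only [x, ← hy]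
      exact congr(A t $(hA.splitting_apply t y).1).symm
    refine ⟨x, fun t ↦ ?_, hbx⟩
    exact ((contDiff_infty_iff_deriv.1 hx).1 t).hasDerivAt.congr_deriv
      ((hA.deriv_deriv_clm_apply_mem_range_iff hx).1 (hbx ▸ hb'' t))
  · rintro ⟨x, hx, rfl⟩
    have hxs : ContDiff ℝ ∞ x := contDiff_infty.2 fun n ↦
      (contDiff_of_isIntegralCurve_clm (contDiff_infty.1 hA.contDiff_normalGenerator n) hx).of_le
        le_self_add
    exact ⟨hA.contDiff.clm_apply hxs, fun t ↦ ⟨x t, rfl⟩,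
      fun t ↦ (hA.deriv_deriv_clm_apply_mem_range_iff hxs).2 (hx t).deriv⟩

theorem exists_mem_normalSections_apply_eq [CompleteSpace F] (hA : IsFanning_s19 A) {v : V}
    (hv : v ∈ (A τ).range) :
    ∃ b ∈ normalSections (fun t ↦ (A t).range), b τ = v := by
  obtain ⟨x₀, rfl⟩ := hv
  obtain ⟨x, hxτ, hx⟩ := exists_isIntegralCurve_clm hA.contDiff_normalGenerator.continuous τ x₀
  exact ⟨_, hA.mem_normalSections_iff.2 ⟨x, hx, rfl⟩, congr(A τ $hxτ)⟩

theorem normalSection_eq_of_apply_eq [CompleteSpace F] (hA : IsFanning_s19 A)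
    (hb : b ∈ normalSections (fun t ↦ (A t).range))
    (hc : c ∈ normalSections (fun t ↦ (A t).range)) (hbc : b τ = c τ) : b = c := by
  obtain ⟨x, hx, rfl⟩ := hA.mem_normalSections_iff.1 hb
  obtain ⟨y, hy, rfl⟩ := hA.mem_normalSections_iff.1 hc
  have hxy : x τ = y τ := by
    simpa [hA.splitting_apply] using congr(splitting A τ $hbc)
  rw [eq_of_isIntegralCurve_clm hA.contDiff_normalGenerator.continuous hx hy hxy]

theorem normalSection_apply_eq_zero_of_deriv_mem [CompleteSpace F] (hA : IsFanning_s19 A)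
    (hb : b ∈ normalSections (fun t ↦ (A t).range)) (hbt : deriv b t ∈ (A t).range) : b t = 0 := by
  obtain ⟨x, hx, rfl⟩ := hA.mem_normalSections_iff.1 hb
  rw [hA.mem_range_iff_snd, deriv_clm_apply (contDiff_infty_iff_deriv.1 hA.contDiff |>.1 t)
    (hx t).differentiableAt, add_comm, hA.splitting_apply_add] at hbt
  simp [show x t = 0 from hbt]

theorem linearIndependent_sumElim_deriv [CompleteSpace F] (hA : IsFanning_s19 A) {ι : Type*}
    {b : ι → ℝ → V} (hb : ∀ i, b i ∈ normalSections fun t ↦ (A t).range)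
    (hbτ : LinearIndependent ℝ fun i ↦ b i τ) (t : ℝ) :
    LinearIndependent ℝ (Sum.elim (fun i ↦ b i t) fun i ↦ deriv (b i) t) := by
  set ℓ : ℝ → Submodule ℝ V := fun t ↦ (A t).range
  let eval (t : ℝ) : normalSections ℓ →ₗ[ℝ] V := LinearMap.proj t ∘ₗ (normalSections ℓ).subtype
  have eval_ker (t : ℝ) : (eval t).ker = ⊥ := LinearMap.ker_eq_bot.2 fun b c hbc ↦
    Subtype.ext (hA.normalSection_eq_of_apply_eq b.2 c.2 hbc)
  have velocity_ker : ((ℓ t).mkQ ∘ₗ velocity ℓ t).ker = ⊥ := LinearMap.ker_eq_bot'.2 fun b hbt ↦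
    LinearMap.ker_eq_bot'.1 (eval_ker t) b <| hA.normalSection_apply_eq_zero_of_deriv_mem b.2 <|
      (Submodule.Quotient.mk_eq_zero _).1 hbt
  have hbind : LinearIndependent ℝ fun i ↦ (⟨b i, hb i⟩ : normalSections ℓ) :=
    .of_comp (eval τ) hbτ
  have hbt : LinearIndependent ℝ fun i ↦ (⟨b i t, (hb i).2.1 t⟩ : ℓ t) :=
    .of_comp (ℓ t).subtype (hbind.map' (eval t) (eval_ker t))
  exact hbt.sumElim_of_quotient _ (hbind.map' _ velocity_ker)

end IsFanning_s19

end Fanning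

section Frame

variable {ι V : Type*} [Fintype ι] [NormedAddCommGroup V] [NormedSpace ℝ V]

/-- The operator `c ↦ ∑ i, c i • a i` of a finite family `a`, which encodes a frame for
`IsFanning`; it is bundled as a continuous linear map in `a` so that it can be differentiated. -/
noncomputable def frameOperator : (ι → V) →L[ℝ] (ι → ℝ) →L[ℝ] V :=
  ∑ i, ContinuousLinearMap.smulRightL ℝ (ι → ℝ) V (.proj i) ∘L .proj i

theorem frameOperator_apply (a : ι → V) (c : ι → ℝ) : frameOperator a c = ∑ i, c i • a i := by
  simp [frameOperator]

theorem range_frameOperator (a : ι → V) :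
    (frameOperator a).range = Submodule.span ℝ (range a) := by
  ext v
  simp [Submodule.mem_span_range_iff_exists_fun, frameOperator_apply]

theorem isInvertible_coprod_frameOperator {a a' : ι → V}
    (hind : LinearIndependent ℝ (Sum.elim a a'))
    (hspan : Submodule.span ℝ (range (Sum.elim a a')) = ⊤) :
    ((frameOperator a).coprod (frameOperator a')).IsInvertible := by
  let e := (LinearEquiv.sumArrowLequivProdArrow ι ι ℝ ℝ).symm ≪≫ₗ
    (Module.Basis.mk hind hspan.ge).equivFun.symm
  refine ⟨e.toContinuousLinearEquiv, ContinuousLinearMap.ext fun c ↦ ?_⟩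
  obtain ⟨c, d⟩ := c
  simp [e, frameOperator_apply, Module.Basis.equivFun_symm_apply]

theorem isFanning_frameOperator {A A' : ℝ → ι → V}
    (hA : ∀ i, ContDiff ℝ ∞ fun t ↦ A t i)
    (hA' : ∀ i t, HasDerivAt (fun s ↦ A s i) (A' t i) t)
    (hfan : ∀ t, LinearIndependent ℝ (Sum.elim (A t) (A' t)) ∧
      Submodule.span ℝ (range (Sum.elim (A t) (A' t))) = ⊤) :
    IsFanning_s19 fun t ↦ frameOperator (A t) where
  contDiff := (frameOperator (ι := ι) (V := V)).contDiff.comp (contDiff_pi.2 hA)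
  isInvertible t := by
    have hderiv : HasDerivAt (fun t ↦ frameOperator (A t)) (frameOperator (A' t)) t :=
      (frameOperator (ι := ι) (V := V)).hasFDerivAt.comp_hasDerivAt t
        (hasDerivAt_pi.2 (hA' · t))
    rw [hderiv.deriv]
    exact isInvertible_coprod_frameOperator (hfan t).1 (hfan t).2

end Frame

/-- **Existence and uniqueness of normal frames.**  Let `A` be a fanning frame in `V`,
`τ ∈ ℝ`, and `(v_1, …, v_n)` a basis of `ℓ(τ)`.  Then there is a unique smooth frame `B`
with `b_i(t) ∈ ℓ(t)`, `b_1(t), …, b_n(t)` linearly independent for each `t`,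
`b_i(τ) = v_i`, and `B` normal (i.e. `b̈_j(t) ∈ ℓ(t)` for all `t, j`).  Moreover this
`B` is fanning. -/
theorem normal_frame_exists_unique
    {V : Type*} [NormedAddCommGroup V] [NormedSpace ℝ V] [FiniteDimensional ℝ V]
    {n : ℕ} (hn : 0 < n) (hdim : Module.finrank ℝ V = 2 * n)
    (A A' : ℝ → Fin n → V)
    (hA : ∀ i, ContDiff ℝ (⊤ : ℕ∞) (fun t => A t i))
    (hA' : ∀ i t, HasDerivAt (fun s => A s i) (A' t i) t)
    (hfan : ∀ t, LinearIndependent ℝ (Sum.elim (A t) (A' t)) ∧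
      Submodule.span ℝ (Set.range (Sum.elim (A t) (A' t))) = ⊤)
    (τ : ℝ) (v : Fin n → V)
    (hvind : LinearIndependent ℝ v)
    (hvspan : Submodule.span ℝ (Set.range v) = Submodule.span ℝ (Set.range (A τ))) :
    ∃ B : ℝ → Fin n → V,
      (((∀ i, ContDiff ℝ (⊤ : ℕ∞) (fun t => B t i)) ∧
        (∀ t i, B t i ∈ Submodule.span ℝ (Set.range (A t))) ∧
        (∀ t, LinearIndependent ℝ (B t)) ∧
        (∀ i, B τ i = v i) ∧
        (∀ t j, deriv (deriv (fun u => B u j)) t ∈ Submodule.span ℝ (Set.range (A t)))) ∧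
       -- moreover, this frame is fanning
       (∀ t, LinearIndependent ℝ
           (Sum.elim (B t) (fun j => deriv (fun u => B u j) t)) ∧
         Submodule.span ℝ (Set.range
           (Sum.elim (B t) (fun j => deriv (fun u => B u j) t))) = ⊤)) ∧
      -- uniqueness among frames with the listed properties
      (∀ B₂ : ℝ → Fin n → V,
        ((∀ i, ContDiff ℝ (⊤ : ℕ∞) (fun t => B₂ t i)) ∧
         (∀ t i, B₂ t i ∈ Submodule.span ℝ (Set.range (A t))) ∧
         (∀ t, LinearIndependent ℝ (B₂ t)) ∧
         (∀ i, B₂ τ i = v i) ∧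
         (∀ t j, deriv (deriv (fun u => B₂ u j)) t ∈
            Submodule.span ℝ (Set.range (A t)))) → B₂ = B) := by
  have hΦ := isFanning_frameOperator hA hA' hfan
  have hv (i) : v i ∈ (frameOperator (A τ)).range := by
    rw [range_frameOperator, ← hvspan]
    exact Submodule.subset_span (mem_range_self i)
  choose b hb hbτ using fun i ↦ hΦ.exists_mem_normalSections_apply_eq (hv i)
  have hind := hΦ.linearIndependent_sumElim_deriv hb (τ := τ) (by simpa only [hbτ] using hvind)
  simp only [← range_frameOperator (A _)]
  refine ⟨fun t i ↦ b i t, ⟨⟨fun i ↦ (hb i).1, fun t i ↦ (hb i).2.1 t,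
    fun t ↦ (hind t).comp _ Sum.inl_injective, hbτ, fun t i ↦ (hb i).2.2 t⟩,
    fun t ↦ ⟨hind t, (hind t).span_eq_top_of_card_eq_finrank' (by simp [hdim, two_mul])⟩⟩, ?_⟩
  rintro B₂ ⟨hB₂, hB₂ℓ, -, hB₂τ, hB₂''⟩
  have hB₂mem (i) : (fun t ↦ B₂ t i) ∈ normalSections fun t ↦ (frameOperator (A t)).range :=
    ⟨hB₂ i, fun t ↦ hB₂ℓ t i, fun t ↦ hB₂'' t i⟩
  funext t i
  exact congr($(hΦ.normalSection_eq_of_apply_eq (hB₂mem i) (hb i)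
    ((hB₂τ i).trans (hbτ i).symm)) t)
end
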